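/- arXiv:2205.09686 — 2 statements merged into one kernel-verified Lean document; each statement's English description precedes it below -/
import Mathlib

section
/- For every integer n ≥ 7, the number of Dyck paths D ∈ D̂_n with x_1(D) = y_2(D) + 1 ≥ 2 equals Σ_{i=0}^{n-7} (i+1)·M_i·M_{n-7-i}. -/
/-- A Dyck path of semilength `n`, encoded as a word on `Bool`
(`true` = up step `u`, `false` = down step `d`). -/
def IsDyckWord (n : ℕ) (w : List Bool) : Prop :=
  w.length = 2 * n ∧ w.count true = n ∧ w.count false = n ∧
    ∀ p : List Bool, p <+: w → p.count false ≤ p.count true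

/-- The (0-based) indices of the up steps of `w`. -/
def upIdxs (w : List Bool) : List ℕ := w.findIdxs (· == true)

/-- The (0-based) indices of the down steps of `w`. -/
def downIdxs (w : List Bool) : List ℕ := w.findIdxs (· == false)

/-- `rStat w i` is the number of `d`'s strictly between the `i`-th and the
`(i+1)`-st `u` of `w` (with `i` 1-indexed). -/
def rStat (w : List Bool) (i : ℕ) : ℕ :=
  ((w.take ((upIdxs w).getD i 0)).drop ((upIdxs w).getD (i - 1) 0 + 1)).count false

/-- `sStat w i` is the number of `u`'s strictly between the `i`-th and the
`(i+1)`-st `d` of `w` (with `i` 1-indexed). -/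
def sStat (w : List Bool) (i : ℕ) : ℕ :=
  ((w.take ((downIdxs w).getD i 0)).drop ((downIdxs w).getD (i - 1) 0 + 1)).count true

/-- The statistic `L(D) = ∏_{i=1}^{n-1} C(r_i + s_i, r_i)` of a Dyck path of semilength `n`. -/
def LStat (n : ℕ) (w : List Bool) : ℕ :=
  ∏ i ∈ Finset.Icc 1 (n - 1), Nat.choose (rStat w i + sStat w i) (rStat w i)

/-- `dyckL n k` = the set `𝒟ₙᵏ` of Dyck paths of semilength `n` with `L(D) = k`. -/
def dyckL (n k : ℕ) : Set (List Bool) := {w | IsDyckWord n w ∧ LStat n w = k}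

/-- A Motzkin path, encoded as a word on `Option Bool`
(`some true` = up, `some false` = down, `none` = horizontal). -/
def IsMotzkinWord (w : List (Option Bool)) : Prop :=
  w.count (some false) = w.count (some true) ∧
    ∀ p : List (Option Bool), p <+: w → p.count (some false) ≤ p.count (some true)

/-- `motzkin n` = the `n`-th Motzkin number `Mₙ`, the number of Motzkin paths of length `n`. -/
noncomputable def motzkin (n : ℕ) : ℕ :=
  {w : List (Option Bool) | w.length = n ∧ IsMotzkinWord w}.ncard

/-- The Motzkin ballot number `T_{n,k}`: the number of Motzkin paths of length `n`
whose first down step is in position `k` (1-indexed); by convention `T_{k-1,k} = 1`,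
counting the path of `k-1` horizontal steps. -/
noncomputable def motzkinBallot (n k : ℕ) : ℕ :=
  if n + 1 = k then 1
  else
    {w : List (Option Bool) | w.length = n ∧ IsMotzkinWord w ∧
      w.getD (k - 1) none = some false ∧ ∀ j < k - 1, w.getD j none ≠ some false}.ncard

/-- Motzkin numbers with integer index: `Mᵢ = 0` for `i < 0`. -/
noncomputable def motzkinZ (i : ℤ) : ℤ := if 0 ≤ i then (motzkin i.toNat : ℤ) else 0

/-- Motzkin ballot numbers with integer first index: `T_{n,k} = 0` for `n < 0`. -/
noncomputable def motzkinBallotZ (n : ℤ) (k : ℕ) : ℤ :=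
  if 0 ≤ n then (motzkinBallot n.toNat k : ℤ) else 0

/-- The set of returns of a Dyck path `w` of semilength `n`:
indices `1 ≤ k ≤ n` such that the path touches the `x`-axis after `2k` steps. -/
def returns (n : ℕ) (w : List Bool) : Finset ℕ :=
  (Finset.Icc 1 n).filter fun k => (w.take (2 * k)).count false = (w.take (2 * k)).count true

/-- `dyckRS n r s` = the set `𝒟ₙ^{r,s}` of Dyck paths of semilength `n` having exactly one
index `i` with `rᵢ > 0` and `sᵢ > 0`, and such that at that index `rᵢ = r` and `sᵢ = s`. -/
def dyckRS (n r s : ℕ) : Set (List Bool) :=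
  {w | IsDyckWord n w ∧ ∃ i ∈ Finset.Icc 1 (n - 1),
    (0 < rStat w i ∧ 0 < sStat w i) ∧ rStat w i = r ∧ sStat w i = s ∧
      ∀ j ∈ Finset.Icc 1 (n - 1), 0 < rStat w j ∧ 0 < sStat w j → j = i}

/-- `twoStars n w k₁ k₂` says that `k₁ < k₂` are exactly the two indices `i` of `w`
with `rᵢ > 0` and `sᵢ > 0`. -/
def twoStars (n : ℕ) (w : List Bool) (k₁ k₂ : ℕ) : Prop :=
  k₁ ∈ Finset.Icc 1 (n - 1) ∧ k₂ ∈ Finset.Icc 1 (n - 1) ∧ k₁ < k₂ ∧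
    (0 < rStat w k₁ ∧ 0 < sStat w k₁) ∧ (0 < rStat w k₂ ∧ 0 < sStat w k₂) ∧
    ∀ j ∈ Finset.Icc 1 (n - 1), 0 < rStat w j ∧ 0 < sStat w j → j = k₁ ∨ j = k₂

/-- `xStat w k` = the number of indices `i < k` with `rᵢ = 0` and `sᵢ > 0`. -/
def xStat (w : List Bool) (k : ℕ) : ℕ :=
  ((Finset.Ico 1 k).filter fun i => rStat w i = 0 ∧ 0 < sStat w i).card

/-- `yStat w k` = the number of indices `i < k` with `rᵢ > 0` and `sᵢ = 0`. -/
def yStat (w : List Bool) (k : ℕ) : ℕ :=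
  ((Finset.Ico 1 k).filter fun i => 0 < rStat w i ∧ sStat w i = 0).card

/-- The generating function `m(x) = Σ Mₙ xⁿ` of the Motzkin numbers, over `ℚ`. -/
noncomputable def motzkinGF : PowerSeries ℚ := PowerSeries.mk fun n => (motzkin n : ℚ)

/-- The number of letters `b` of `w` preceded by exactly `i` letters different from `b`. -/
def lettersAt (b : Bool) : List Bool → ℕ → ℕ
  | [], _ => 0
  | c :: w, i =>
    if c = b then lettersAt b w i + (if i = 0 then 1 else 0)
    else match i with
      | 0 => 0
      | i + 1 => lettersAt b w i

/-- For every letter `b` of `w`, whether it ends a maximal run of letters `b`. -/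
def runEnds (b : Bool) : List Bool → List Bool
  | [] => []
  | c :: w => if c = b then decide (w.head? ≠ some b) :: runEnds b w else runEnds b w

/-- The distance between the `p`-th and the `(p+1)`-st entry `true` of a list, where the
`0`-th one is placed just before the list. -/
def gap : List Bool → ℕ → ℕ
  | [], _ => 0
  | true :: _, 0 => 1
  | true :: l, p + 1 => gap l p
  | false :: l, 0 => gap l 0 + 1
  | false :: l, p + 1 => gap l (p + 1)

/-- The `p`-th and the `(p+1)`-st entry `true` of a list exist and are adjacent, where the
`0`-th one is placed just before the list. -/
def AdjTrue : List Bool → ℕ → Prop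
  | [], _ => False
  | true :: _, 0 => True
  | true :: l, p + 1 => AdjTrue l p
  | false :: _, 0 => False
  | false :: l, p + 1 => AdjTrue l (p + 1)

lemma lettersAt_cons_self (b : Bool) (w : List Bool) (i : ℕ) :
    lettersAt b (b :: w) i = lettersAt b w i + if i = 0 then 1 else 0 := by
  cases i <;> simp [lettersAt]

lemma gap_pos {l : List Bool} {p : ℕ} (h : p < l.count true) : 0 < gap l p := by
  induction l generalizing p with
  | nil => simp at h
  | cons a l ih =>
    cases a <;> cases p <;> simp_all [gap]

lemma gap_eq_one_iff {l : List Bool} {p : ℕ} (h : p < l.count true) :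
    gap l p = 1 ↔ AdjTrue l p := by
  induction l generalizing p with
  | nil => simp at h
  | cons a l ih =>
    cases a <;> cases p <;> simp_all [gap, AdjTrue]
    have := gap_pos (List.count_pos_iff.2 h)
    omega

lemma findIdxs_getD_cons (q : Bool → Bool) (c : Bool) (w : List Bool) (i : ℕ)
    (h : i < (c :: w).countP q) :
    ((c :: w).findIdxs q).getD i 0 =
      if q c then (match i with | 0 => 0 | i + 1 => (w.findIdxs q).getD i 0 + 1)
      else (w.findIdxs q).getD i 0 + 1 := by
  rw [List.findIdxs_cons, List.findIdxs_start]
  by_cases hc : q c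
  · cases i with
    | zero => simp [hc]
    | succ i =>
      have : i < w.countP q := by simpa [hc] using h
      simp [hc, List.getD_eq_getElem?_getD, this]
  · have : i < w.countP q := by simpa [hc] using h
    simp [hc, List.getD_eq_getElem?_getD, this]

lemma count_take_findIdxs (b : Bool) (w : List Bool) (h : 0 < w.count (!b)) :
    (w.take ((w.findIdxs (· == !b)).getD 0 0)).count b = lettersAt b w 0 := by
  induction w with
  | nil => simp at h
  | cons c w ih =>
    rw [findIdxs_getD_cons _ _ _ _ h]
    by_cases hc : c = !b
    · subst hc
      simp [lettersAt]
    · obtain rfl : c = b := by revert hc; cases b <;> cases c <;> simp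
      have := ih (by simpa using h)
      simpa [lettersAt] using this

lemma count_between_findIdxs (b : Bool) (w : List Bool) (i : ℕ) (h : i + 1 < w.count (!b)) :
    ((w.take ((w.findIdxs (· == !b)).getD (i + 1) 0)).drop
      ((w.findIdxs (· == !b)).getD i 0 + 1)).count b = lettersAt b w (i + 1) := by
  induction w generalizing i with
  | nil => simp at h
  | cons c w ih =>
    rw [findIdxs_getD_cons _ _ _ _ h, findIdxs_getD_cons _ _ _ _ (Nat.lt_of_succ_lt h)]
    by_cases hc : c = !b
    · subst hc
      cases i with
      | zero =>
        have := count_take_findIdxs b w (by simpa using h)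
        simpa [lettersAt] using this
      | succ i =>
        have := ih i (by simpa using h)
        simpa [lettersAt] using this
    · obtain rfl : c = b := by revert hc; cases b <;> cases c <;> simp
      have := ih i (by simpa using h)
      simpa [lettersAt] using this

lemma rStat_eq {w : List Bool} {i : ℕ} (hi : 1 ≤ i) (h : i < w.count true) :
    rStat w i = lettersAt false w i := by
  obtain ⟨i, rfl⟩ := Nat.exists_eq_add_of_le' hi
  exact count_between_findIdxs false w i h

lemma sStat_eq {w : List Bool} {i : ℕ} (hi : 1 ≤ i) (h : i < w.count false) :
    sStat w i = lettersAt true w i := by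
  obtain ⟨i, rfl⟩ := Nat.exists_eq_add_of_le' hi
  exact count_between_findIdxs true w i h

lemma length_runEnds (b : Bool) (w : List Bool) : (runEnds b w).length = w.count b := by
  induction w with
  | nil => rfl
  | cons c w ih => by_cases hc : c = b <;> simp [runEnds, hc, ih]

lemma lettersAt_eq_gap (b : Bool) (w : List Bool) (i : ℕ) :
    lettersAt b w i =
      if (decide (w.head? ≠ some (!b)) :: runEnds (!b) w).getD i false then
        gap (runEnds b w) (((decide (w.head? ≠ some (!b)) :: runEnds (!b) w).take i).count true)
      else 0 := by
  induction w generalizing i with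
  | nil => simp [lettersAt, runEnds, gap]
  | cons c w ih =>
    by_cases hc : c = b
    · subst hc
      rcases w with _ | ⟨a, w⟩
      · cases i <;> cases c <;> simp [lettersAt, runEnds, gap]
      · rw [lettersAt_cons_self, ih]
        cases i <;> cases a <;> cases c <;> simp [runEnds, gap]
    · obtain rfl : c = !b := by revert hc; cases b <;> cases c <;> simp
      cases i with
      | zero => simp [lettersAt]
      | succ i => simp [lettersAt, runEnds, ih]

/-- The word on `{u, d}` beginning with the letter `st` in which the `i`-th `u` ends a run of
`u`'s iff the `i`-th entry of `P` is `true`, and the `i`-th `d` ends a run of `d`'s iff the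
`i`-th entry of `V` is `true`. -/
def weave : Bool → List Bool → List Bool → List Bool
  | true, p :: P, V => true :: weave (!p) P V
  | false, P, v :: V => false :: weave v P V
  | true, [], _ => []
  | false, _, [] => []
termination_by _ P V => P.length + V.length

lemma weave_runEnds (st : Bool) (w : List Bool) (h : w.head? ≠ some (!st)) :
    weave st (runEnds true w) (runEnds false w) = w := by
  induction w generalizing st with
  | nil => cases st <;> simp [runEnds, weave]
  | cons c w ih =>
    obtain rfl : c = st := by revert h; cases c <;> cases st <;> simp
    cases c
    · simp only [runEnds, weave, if_true, Bool.false_eq_true, if_false]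
      rw [ih]
      by_cases hw : w.head? = some false <;> simp [hw]
    · simp only [runEnds, weave, if_true, Bool.true_eq_false, if_false]
      rw [ih]
      by_cases hw : w.head? = some true <;> simp [hw]

lemma head?_weave_ne (st : Bool) (P V : List Bool) : (weave st P V).head? ≠ some (!st) := by
  cases st <;> cases P <;> cases V <;> simp [weave]

lemma runEnds_weave (st : Bool) (P V : List Bool) (hP : P.getLast? ≠ some false)
    (hV : V.getLast? ≠ some false)
    (h : V.count true = P.count true + if st then 0 else 1) :
    runEnds true (weave st P V) = P ∧ runEnds false (weave st P V) = V := by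
  induction st, P, V using weave.induct with
  | case1 p P V ih =>
    obtain ⟨h1, h2⟩ := ih (by cases P <;> simp_all [List.getLast?_cons]) hV (by
      cases p <;> simp_all)
    have := head?_weave_ne (!p) P V
    cases p
    · obtain ⟨q, Q, rfl⟩ : ∃ q Q, P = q :: Q := by cases P <;> simp_all
      simp_all [weave, runEnds]
    · simp_all [weave, runEnds]
  | case2 P v V ih =>
    obtain ⟨h1, h2⟩ := ih hP (by cases V <;> simp_all [List.getLast?_cons]) (by
      cases v <;> simp_all)
    have := head?_weave_ne v P V
    cases v
    · obtain ⟨q, Q, rfl⟩ : ∃ q Q, V = q :: Q := by cases V <;> simp_all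
      simp_all [weave, runEnds]
    · simp_all [weave, runEnds]
  | case3 V =>
    rcases List.eq_nil_or_concat' V with rfl | ⟨L, a, rfl⟩
    · simp [weave, runEnds]
    · cases a <;> simp_all
  | case4 P => simp at h

lemma count_runEnds (w : List Bool) (h : w.getLast? ≠ some true) :
    (runEnds true w).count true + (if w.head? = some false then 1 else 0) =
      (runEnds false w).count true := by
  induction w with
  | nil => simp [runEnds]
  | cons c w ih =>
    have ih := ih (by cases w <;> simp_all [List.getLast?_cons])
    rcases w with _ | ⟨a, w⟩
    · cases c <;> simp_all [runEnds]
    · cases c <;> cases a <;> simp_all [runEnds]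

lemma prefix_count_iff (w : List Bool) (h : ℕ) (hw : w.getLast? ≠ some true) :
    (∀ p, p <+: w → p.count false ≤ h + p.count true) ↔
      ∀ k, ((runEnds true w).take k).count true + (if w.head? = some false then 1 else 0) ≤
        ((runEnds false w).take (k + h)).count true := by
  induction w generalizing h with
  | nil => simp [runEnds]
  | cons c w ih =>
    have ih := fun h => ih h (by cases w <;> simp_all [List.getLast?_cons])
    cases c
    · cases h with
      | zero =>
        constructor
        · intro H
          have := H [false] (by simp)
          simp at this
        · intro H
          have := H 0
          simp at this
      | succ h =>
        have : (∀ p, p <+: false :: w → p.count false ≤ h + 1 + p.count true) ↔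
            ∀ p, p <+: w → p.count false ≤ h + p.count true := by
          constructor
          · intro H p hp
            have := H (false :: p) (by simpa using hp)
            simp at this; omega
          · intro H p hp
            rcases List.prefix_cons_iff.1 hp with rfl | ⟨t, rfl, ht⟩
            · simp
            · have := H t ht
              simp; omega
        rw [this, ih]
        refine forall_congr' fun k => ?_
        by_cases hw : w.head? = some false <;>
          simp [runEnds, hw, ← add_assoc]
    · have : (∀ p, p <+: true :: w → p.count false ≤ h + p.count true) ↔
          ∀ p, p <+: w → p.count false ≤ (h + 1) + p.count true := by
        constructor
        · intro H p hp
          have := H (true :: p) (by simpa using hp)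
          simp at this; omega
        · intro H p hp
          rcases List.prefix_cons_iff.1 hp with rfl | ⟨t, rfl, ht⟩
          · simp
          · have := H t ht
            simp; omega
      rw [this, ih]
      obtain ⟨a, w, rfl⟩ : ∃ a v, w = a :: v := by cases w <;> simp_all
      have key : ∀ k, (((runEnds true (true :: a :: w)).take (k + 1)).count true) =
          ((runEnds true (a :: w)).take k).count true + if a = false then 1 else 0 := by
        intro k
        cases a <;> simp [runEnds]
      constructor
      · intro H k
        cases k with
        | zero => simp
        | succ k =>
          have := H k
          rw [key]
          simpa [runEnds, add_assoc, add_comm 1 h] using this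
      · intro H k
        have := H (k + 1)
        rw [key] at this
        simpa [runEnds, add_assoc, add_comm 1 h] using this

/-- The word on `{u, d}` in which the `i`-th `u` (resp. the `i`-th `d`) ends a run iff the first
(resp. second) component of the `i`-th letter of `c` is `true`. -/
def dyckOf (c : List (Bool × Bool)) : List Bool :=
  weave true (c.map Prod.fst ++ [true]) (c.map Prod.snd ++ [true])

/-- Two-coloured Motzkin words: `(false, true)` is an up step, `(true, false)` a down step, and
`(false, false)`, `(true, true)` are the two kinds of horizontal steps. -/
def IsTwoMotzkin (c : List (Bool × Bool)) : Prop :=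
  (∀ p, p <+: c → p.countP Prod.fst ≤ p.countP Prod.snd) ∧ c.countP Prod.fst = c.countP Prod.snd

lemma count_map_true {α : Type*} (f : α → Bool) (l : List α) :
    (l.map f).count true = l.countP f := by
  rw [List.count, List.countP_map]
  congr 1
  ext a
  simp

lemma count_take_map {α : Type*} (f : α → Bool) (l : List α) (k : ℕ) :
    ((l.map f ++ [true]).take k).count true =
      (l.take k).countP f + if l.length < k then 1 else 0 := by
  rw [List.take_append, List.count_append, ← List.map_take, count_map_true, List.length_map]
  split_ifs with h
  · rw [List.take_of_length_le (l := [true]) (by simp only [List.length_singleton]; omega)]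
    simp
  · have : k - l.length = 0 := by omega
    simp [this]

lemma runEnds_dyckOf {c : List (Bool × Bool)} (h : c.countP Prod.fst = c.countP Prod.snd) :
    runEnds true (dyckOf c) = c.map Prod.fst ++ [true] ∧
      runEnds false (dyckOf c) = c.map Prod.snd ++ [true] := by
  apply runEnds_weave <;> simp [count_map_true, h]

lemma head?_dyckOf (c : List (Bool × Bool)) : (dyckOf c).head? = some true := by
  unfold dyckOf
  cases c <;> simp [weave]

lemma head?_of_runEnds_eq_nil {b : Bool} {w : List Bool} (h : runEnds b w = []) :
    w.head? ≠ some b := by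
  rcases w with _ | ⟨a, w⟩
  · simp
  · rintro h2
    simp only [List.head?_cons, Option.some.injEq] at h2
    simp [runEnds, h2] at h

lemma getLast?_runEnds (b : Bool) (w : List Bool) : (runEnds b w).getLast? ≠ some false := by
  induction w with
  | nil => simp [runEnds]
  | cons c w ih =>
    by_cases hc : c = b
    · rcases hr : runEnds b w with _ | ⟨a, l⟩
      · simp [runEnds, hr, hc, head?_of_runEnds_eq_nil hr]
      · rw [hr] at ih
        simpa [runEnds, hr, hc, List.getLast?_cons] using ih
    · simpa [runEnds, hc] using ih

lemma runEnds_eq_append {b : Bool} {w : List Bool} {m : ℕ} (h : w.count b = m + 1) :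
    ∃ l : List Bool, l.length = m ∧ runEnds b w = l ++ [true] := by
  have hl := getLast?_runEnds b w
  have hn := length_runEnds b w
  rcases List.eq_nil_or_concat' (runEnds b w) with h0 | ⟨l, a, ha⟩
  · simp [h0, h] at hn
  · refine ⟨l, ?_, ?_⟩
    · simp [ha, h] at hn
      exact hn
    · cases a <;> simp_all

lemma getLast?_weave_ne (st : Bool) (P V : List Bool) (hP : P.getLast? ≠ some false)
    (hV : V.getLast? ≠ some false)
    (h : V.count true = P.count true + if st then 0 else 1) :
    (weave st P V).getLast? ≠ some true := by
  induction st, P, V using weave.induct with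
  | case1 p P V ih =>
    have ih := ih (by cases P <;> simp_all [List.getLast?_cons]) hV (by cases p <;> simp_all)
    rcases hw : weave (!p) P V with _ | ⟨a, w⟩
    · exfalso
      cases p
      · cases P <;> simp_all [weave]
      · cases V <;> simp_all [weave]
    · rw [hw] at ih
      simpa [weave, hw, List.getLast?_cons] using ih
  | case2 P v V ih =>
    have ih := ih hP (by cases V <;> simp_all [List.getLast?_cons]) (by cases v <;> simp_all)
    rcases hw : weave v P V with _ | ⟨a, w⟩
    · simp [weave, hw]
    · rw [hw] at ih
      simpa [weave, hw, List.getLast?_cons] using ih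
  | case3 V => simp [weave]
  | case4 P => simp [weave]

lemma getLast?_dyckOf {c : List (Bool × Bool)} (h : c.countP Prod.fst = c.countP Prod.snd) :
    (dyckOf c).getLast? ≠ some true := by
  apply getLast?_weave_ne <;> simp [count_map_true, h]

lemma prefix_iff_take {α : Type*} (l : List α) (q : List α → Prop) :
    (∀ p, p <+: l → q p) ↔ ∀ k, q (l.take k) := by
  constructor
  · exact fun H k => H _ (List.take_prefix _ _)
  · intro H p hp
    rw [List.prefix_iff_eq_take.1 hp]
    exact H _

lemma IsTwoMotzkin.isDyckWord {c : List (Bool × Bool)} (h : IsTwoMotzkin c) :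
    IsDyckWord (c.length + 1) (dyckOf c) := by
  obtain ⟨h1, h2⟩ := runEnds_dyckOf h.2
  have ht : (dyckOf c).count true = c.length + 1 := by rw [← length_runEnds, h1]; simp
  have hf : (dyckOf c).count false = c.length + 1 := by rw [← length_runEnds, h2]; simp
  refine ⟨?_, ht, hf, ?_⟩
  · rw [← List.count_true_add_count_false (dyckOf c), ht, hf]; ring
  · have := (prefix_count_iff (dyckOf c) 0 (getLast?_dyckOf h.2)).2 (by
      intro k
      rw [h1, h2, head?_dyckOf]
      simp only [add_zero, count_take_map]
      have := h.1 _ (List.take_prefix k c)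
      simpa using this)
    simpa using this

lemma IsDyckWord.exists_dyckOf {m : ℕ} {w : List Bool} (h : IsDyckWord (m + 1) w) :
    ∃ c, c.length = m ∧ IsTwoMotzkin c ∧ dyckOf c = w := by
  obtain ⟨hl, ht, hf, hp⟩ := h
  obtain ⟨P, hPl, hP⟩ := runEnds_eq_append ht
  obtain ⟨V, hVl, hV⟩ := runEnds_eq_append hf
  have hfst : (P.zip V).map Prod.fst = P := List.map_fst_zip (by omega)
  have hsnd : (P.zip V).map Prod.snd = V := List.map_snd_zip (by omega)
  have hhead : w.head? ≠ some false := by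
    rcases w with _ | ⟨a, w⟩
    · simp
    · have := hp [a] (by simp)
      cases a <;> simp_all
  have hlast : w.getLast? ≠ some true := by
    rcases List.eq_nil_or_concat' w with rfl | ⟨l, a, rfl⟩
    · simp
    · have := hp l (by simp)
      cases a
      · simp
      · simp at ht hf
        omega
  have hcount := count_runEnds w hlast
  have hbal : (P.zip V).countP Prod.fst = (P.zip V).countP Prod.snd := by
    rw [← count_map_true, ← count_map_true, hfst, hsnd]
    simpa [hP, hV, hhead] using hcount
  refine ⟨P.zip V, by simp [hPl, hVl], ⟨?_, hbal⟩, ?_⟩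
  · rw [prefix_iff_take]
    intro k
    have := (prefix_count_iff w 0 hlast).1 (by simpa using hp) k
    have e1 := count_take_map Prod.fst (P.zip V) k
    have e2 := count_take_map Prod.snd (P.zip V) k
    rw [hfst] at e1
    rw [hsnd] at e2
    simp only [hP, hV, add_zero, hhead, if_false, e1, e2] at this
    omega
  · rw [dyckOf, hfst, hsnd, ← hP, ← hV]
    exact weave_runEnds true w hhead

lemma dyckOf_injOn : Set.InjOn dyckOf {c | IsTwoMotzkin c} := by
  intro c hc c' hc' h
  obtain ⟨h1, h2⟩ := runEnds_dyckOf hc.2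
  obtain ⟨h1', h2'⟩ := runEnds_dyckOf hc'.2
  rw [h, h1'] at h1
  rw [h, h2'] at h2
  have e1 := List.append_cancel_right h1
  have e2 := List.append_cancel_right h2
  rw [← List.zip_unzip c, ← List.zip_unzip c', List.unzip_eq_map, List.unzip_eq_map]
  simp only
  rw [e1, e2]

lemma rStat_dyckOf {c c₁ c₂ : List (Bool × Bool)} {a : Bool × Bool}
    (hc : c.countP Prod.fst = c.countP Prod.snd) (h : c = c₁ ++ a :: c₂) :
    rStat (dyckOf c) (c₁.length + 1) =
      if a.1 then gap (c.map Prod.snd ++ [true]) (c₁.countP Prod.fst) else 0 := by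
  obtain ⟨h1, h2⟩ := runEnds_dyckOf hc
  have ht : (dyckOf c).count true = c.length + 1 := by rw [← length_runEnds, h1]; simp
  rw [rStat_eq (by omega) (by rw [ht, h]; simp), lettersAt_eq_gap, h2]
  simp only [Bool.not_false, h1, head?_dyckOf, ne_eq, not_true_eq_false, decide_false,
    List.getD_cons_succ, List.take_succ_cons, List.count_cons, count_take_map]
  simp [h, List.getD_eq_getElem?_getD]

lemma sStat_dyckOf {c c₁ c₂ : List (Bool × Bool)} {a : Bool × Bool}
    (hc : c.countP Prod.fst = c.countP Prod.snd) (h : c = c₁ ++ a :: c₂) :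
    sStat (dyckOf c) (c₁.length + 1) =
      if a.2 then gap (c.map Prod.fst ++ [true]) (c₁.countP Prod.snd + 1) else 0 := by
  obtain ⟨h1, h2⟩ := runEnds_dyckOf hc
  have ht : (dyckOf c).count false = c.length + 1 := by rw [← length_runEnds, h2]; simp
  rw [sStat_eq (by omega) (by rw [ht, h]; simp), lettersAt_eq_gap, h1]
  simp only [Bool.not_true, h2, head?_dyckOf,
    List.getD_cons_succ, List.take_succ_cons, List.count_cons, count_take_map]
  simp [h, List.getD_eq_getElem?_getD]

lemma choose_add_eq_two {r s : ℕ} (hr : 0 < r) (hs : 0 < s) :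
    2 ≤ (r + s).choose r ∧ ((r + s).choose r = 2 ↔ r = 1 ∧ s = 1) := by
  obtain ⟨r, rfl⟩ := Nat.exists_eq_add_of_le' hr
  obtain ⟨s, rfl⟩ := Nat.exists_eq_add_of_le' hs
  have e : r + 1 + (s + 1) = (r + s + 1) + 1 := by ring
  rw [e, Nat.choose_succ_succ' (r + s + 1) r]
  have h1 : 0 < (r + s + 1).choose r := Nat.choose_pos (by omega)
  have h2 : 0 < (r + s + 1).choose (r + 1) := Nat.choose_pos (by omega)
  refine ⟨by omega, fun h => ?_, ?_⟩
  · have h3 : (r + s + 1).choose r = 1 := by omega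
    have h4 : (r + s + 1).choose (r + 1) = 1 := by omega
    rw [Nat.choose_eq_one_iff] at h3 h4
    omega
  · rintro ⟨h3, h4⟩
    obtain rfl : r = 0 := by omega
    obtain rfl : s = 0 := by omega
    simp

lemma LStat_eq_four_iff {n k₁ k₂ : ℕ} {w : List Bool} (h : twoStars n w k₁ k₂) :
    LStat n w = 4 ↔
      (rStat w k₁ = 1 ∧ sStat w k₁ = 1) ∧ (rStat w k₂ = 1 ∧ sStat w k₂ = 1) := by
  obtain ⟨h1, h2, hlt, ⟨hr1, hs1⟩, ⟨hr2, hs2⟩, huniq⟩ := h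
  have hL : LStat n w = (rStat w k₁ + sStat w k₁).choose (rStat w k₁) *
      (rStat w k₂ + sStat w k₂).choose (rStat w k₂) := by
    unfold LStat
    rw [← Finset.prod_pair hlt.ne
      (f := fun i => (rStat w i + sStat w i).choose (rStat w i))]
    symm
    apply Finset.prod_subset
    · intro i hi
      rcases Finset.mem_insert.1 hi with rfl | hi
      · exact h1
      · rw [Finset.mem_singleton.1 hi]; exact h2
    · intro i hi hni
      by_cases hr : rStat w i = 0
      · simp [hr]
      · by_cases hs : sStat w i = 0
        · simp [hs]
        · exact absurd (huniq i hi ⟨by omega, by omega⟩) (by simpa using hni)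
  obtain ⟨a1, b1⟩ := choose_add_eq_two hr1 hs1
  obtain ⟨a2, b2⟩ := choose_add_eq_two hr2 hs2
  rw [hL, ← b1, ← b2]
  constructor
  · intro h
    constructor <;> nlinarith
  · rintro ⟨h1, h2⟩
    rw [h1, h2]

lemma rStat_dyckOf_pos {c c₁ c₂ : List (Bool × Bool)} {a : Bool × Bool}
    (hc : c.countP Prod.fst = c.countP Prod.snd) (h : c = c₁ ++ a :: c₂) :
    0 < rStat (dyckOf c) (c₁.length + 1) ↔ a.1 = true := by
  rw [rStat_dyckOf hc h]
  split_ifs with ha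
  · refine iff_of_true (gap_pos ?_) ha
    rw [List.count_append, count_map_true, ← hc, h]
    simp [ha]
  · simpa using ha

lemma sStat_dyckOf_pos {c c₁ c₂ : List (Bool × Bool)} {a : Bool × Bool}
    (hc : c.countP Prod.fst = c.countP Prod.snd) (h : c = c₁ ++ a :: c₂) :
    0 < sStat (dyckOf c) (c₁.length + 1) ↔ a.2 = true := by
  rw [sStat_dyckOf hc h]
  split_ifs with ha
  · refine iff_of_true (gap_pos ?_) ha
    rw [List.count_append, count_map_true, hc, h]
    simp [ha]
  · simpa using ha

lemma stat_dyckOf_eq_one {c c₁ c₂ : List (Bool × Bool)}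
    (hc : c.countP Prod.fst = c.countP Prod.snd) (h : c = c₁ ++ (true, true) :: c₂) :
    (rStat (dyckOf c) (c₁.length + 1) = 1 ∧ sStat (dyckOf c) (c₁.length + 1) = 1) ↔
      AdjTrue (c.map Prod.snd ++ [true]) (c₁.countP Prod.fst) ∧
      AdjTrue (c.map Prod.fst ++ [true]) (c₁.countP Prod.snd + 1) := by
  rw [rStat_dyckOf hc h, sStat_dyckOf hc h, if_pos rfl, if_pos rfl, gap_eq_one_iff,
    gap_eq_one_iff]
  · rw [List.count_append, count_map_true, hc, h]
    simp
  · rw [List.count_append, count_map_true, ← hc, h]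
    simp

lemma card_filter_Ico_eq_countP {α : Type*} (c d d' : List α) (q : ℕ → Prop) [DecidablePred q]
    (f : α → Bool) (hq : ∀ c₁ a c₂, c = c₁ ++ a :: c₂ → (q (c₁.length + 1) ↔ f a = true))
    (hd : c = d ++ d') :
    ((Finset.Ico 1 (d.length + 1)).filter q).card = d.countP f := by
  induction d using List.reverseRecOn generalizing d' with
  | nil => simp
  | append_singleton d a ih =>
    have hd : c = d ++ a :: d' := by simpa using hd
    rw [List.length_append, List.length_singleton, ← Finset.insert_Ico_right_eq_Ico_add_one (by omega),
      Finset.filter_insert]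
    split_ifs with h
    · rw [Finset.card_insert_of_notMem (by simp), ih _ hd, List.countP_append,
        List.countP_singleton, if_pos ((hq _ _ _ hd).1 h)]
    · rw [ih _ hd, List.countP_append, List.countP_singleton,
        if_neg (fun hf => h ((hq _ _ _ hd).2 hf)), add_zero]

lemma xStat_dyckOf {c d d' : List (Bool × Bool)}
    (hc : c.countP Prod.fst = c.countP Prod.snd) (hd : c = d ++ d') :
    xStat (dyckOf c) (d.length + 1) = d.countP (fun a => !a.1 && a.2) := by
  refine card_filter_Ico_eq_countP c d d' _ _ (fun c₁ a c₂ h => ?_) hd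
  rw [sStat_dyckOf_pos hc h, ← Nat.le_zero, ← not_lt, rStat_dyckOf_pos hc h]
  simp

lemma yStat_dyckOf {c d d' : List (Bool × Bool)}
    (hc : c.countP Prod.fst = c.countP Prod.snd) (hd : c = d ++ d') :
    yStat (dyckOf c) (d.length + 1) = d.countP (fun a => a.1 && !a.2) := by
  refine card_filter_Ico_eq_countP c d d' _ _ (fun c₁ a c₂ h => ?_) hd
  rw [rStat_dyckOf_pos hc h, ← Nat.le_zero, ← not_lt, sStat_dyckOf_pos hc h]
  simp

lemma countP_up_eq {d : List (Bool × Bool)} (h : (true, true) ∉ d) :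
    d.countP (fun a => !a.1 && a.2) = d.countP Prod.snd := by
  apply List.countP_congr
  rintro ⟨a, b⟩ hab
  cases a <;> cases b <;> simp_all

lemma countP_down_eq {d : List (Bool × Bool)} (h : (true, true) ∉ d) :
    d.countP (fun a => a.1 && !a.2) = d.countP Prod.fst := by
  apply List.countP_congr
  rintro ⟨a, b⟩ hab
  cases a <;> cases b <;> simp_all

lemma getElem_eq_star {c : List (Bool × Bool)} {i : ℕ}
    (hc : c.countP Prod.fst = c.countP Prod.snd) (hi : i < c.length)
    (hpos : 0 < rStat (dyckOf c) (i + 1) ∧ 0 < sStat (dyckOf c) (i + 1)) :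
    (c)[i] = (true, true) := by
  have hs : c = c.take i ++ (c)[i] :: c.drop (i + 1) := by simp
  have hl : (c.take i).length = i := by simp; omega
  have e1 := rStat_dyckOf_pos hc hs
  have e2 := sStat_dyckOf_pos hc hs
  rw [hl] at e1 e2
  exact Prod.ext (e1.1 hpos.1) (e2.1 hpos.2)

lemma twoStars_dyckOf {c c₁ c₂ c₃ : List (Bool × Bool)}
    (hc : c.countP Prod.fst = c.countP Prod.snd)
    (h : c = c₁ ++ (true, true) :: (c₂ ++ (true, true) :: c₃))
    (h₁ : (true, true) ∉ c₁) (h₂ : (true, true) ∉ c₂) (h₃ : (true, true) ∉ c₃) :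
    twoStars (c.length + 1) (dyckOf c) (c₁.length + 1)
      ((c₁ ++ (true, true) :: c₂).length + 1) := by
  have h' : c = (c₁ ++ (true, true) :: c₂) ++ (true, true) :: c₃ := by simp [h]
  have hlen : c.length = c₁.length + (c₂.length + (c₃.length + 1) + 1) := by simp [h]
  refine ⟨by simp; omega, by simp; omega, by simp, ?_, ?_, ?_⟩
  · rw [rStat_dyckOf_pos hc h, sStat_dyckOf_pos hc h]; simp
  · rw [rStat_dyckOf_pos hc h', sStat_dyckOf_pos hc h']; simp
  · intro j hj hpos
    simp only [Finset.mem_Icc, Nat.add_sub_cancel] at hj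
    obtain ⟨i, rfl⟩ := Nat.exists_eq_add_of_le' hj.1
    have hi : i < c.length := by omega
    have hstar := getElem_eq_star hc hi hpos
    by_contra! hne
    obtain ⟨hne1, hne2⟩ := hne
    simp only [List.length_append, List.length_cons] at hne2
    subst h
    rw [List.getElem_append] at hstar
    split_ifs at hstar with hi1
    · exact h₁ (hstar ▸ List.getElem_mem _)
    · obtain ⟨j, hj⟩ : ∃ j, i - c₁.length = j + 1 := ⟨i - c₁.length - 1, by omega⟩
      simp only [hj, List.getElem_cons_succ] at hstar
      rw [List.getElem_append] at hstar
      split_ifs at hstar with hi2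
      · exact h₂ (hstar ▸ List.getElem_mem _)
      · obtain ⟨l, hl⟩ : ∃ l, j - c₂.length = l + 1 := ⟨j - c₂.length - 1, by omega⟩
        simp only [hl, List.getElem_cons_succ] at hstar
        exact h₃ (hstar ▸ List.getElem_mem _)

lemma exists_split_of_twoStars {c : List (Bool × Bool)} {k₁ k₂ : ℕ}
    (hc : c.countP Prod.fst = c.countP Prod.snd)
    (h : twoStars (c.length + 1) (dyckOf c) k₁ k₂) :
    ∃ c₁ c₂ c₃ : List (Bool × Bool), c = c₁ ++ (true, true) :: (c₂ ++ (true, true) :: c₃) ∧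
      (true, true) ∉ c₁ ∧ (true, true) ∉ c₂ ∧ (true, true) ∉ c₃ ∧
      k₁ = c₁.length + 1 ∧ k₂ = (c₁ ++ (true, true) :: c₂).length + 1 := by
  obtain ⟨h1, h2, hlt, hp1, hp2, huniq⟩ := h
  have hat : ∀ j ∈ Finset.Icc 1 c.length,
      0 < rStat (dyckOf c) j ∧ 0 < sStat (dyckOf c) j →
      ∃ d d', c = d ++ (true, true) :: d' ∧ j = d.length + 1 := by
    intro j hj hpos
    simp only [Finset.mem_Icc] at hj
    obtain ⟨i, rfl⟩ := Nat.exists_eq_add_of_le' hj.1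
    have hi : i < c.length := by omega
    have hstar := getElem_eq_star hc hi hpos
    exact ⟨c.take i, c.drop (i + 1), by rw [← hstar]; simp, by simp; omega⟩
  have honly : ∀ d d', c = d ++ (true, true) :: d' → d.length + 1 = k₁ ∨ d.length + 1 = k₂ := by
    intro d d' hd
    refine huniq _ (by rw [hd]; simp) ⟨(rStat_dyckOf_pos hc hd).2 rfl, (sStat_dyckOf_pos hc hd).2 rfl⟩
  obtain ⟨d₁, d₁', hd₁, rfl⟩ := hat k₁ h1 hp1
  obtain ⟨d₂, c₃, hd₂, rfl⟩ := hat k₂ h2 hp2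
  obtain ⟨c₂, hc₂⟩ : ∃ c₂, d₂ = d₁ ++ (true, true) :: c₂ := by
    rw [hd₁] at hd₂
    rcases List.append_eq_append_iff.1 hd₂ with ⟨a, ha, hb⟩ | ⟨a, ha, hb⟩
    · rcases a with _ | ⟨x, a⟩
      · simp [ha] at hlt
      · simp only [List.cons_append, List.cons.injEq] at hb
        exact ⟨a, by rw [ha, ← hb.1]⟩
    · rw [ha] at hlt
      simp at hlt
  subst hc₂
  refine ⟨d₁, c₂, c₃, by simpa using hd₂, ?_, ?_, ?_, rfl, rfl⟩
  · intro hm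
    obtain ⟨a, b, hab⟩ := List.append_of_mem hm
    have := honly a (b ++ (true, true) :: d₁') (by rw [hd₁, hab]; simp)
    simp [hab] at this
  · intro hm
    obtain ⟨a, b, hab⟩ := List.append_of_mem hm
    have := honly (d₁ ++ (true, true) :: a) (b ++ (true, true) :: c₃) (by rw [hd₂, hab]; simp)
    simp [hab] at this
  · intro hm
    obtain ⟨a, b, hab⟩ := List.append_of_mem hm
    have := honly (d₁ ++ (true, true) :: c₂ ++ (true, true) :: a) b (by rw [hd₂, hab]; simp)
    simp at this

/-- The conditions on the two-coloured Motzkin word `c` that express that the Dyck path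
`dyckOf c` is one of the paths to be counted. -/
lemma dyckOf_mem_iff {c : List (Bool × Bool)} (hc : c.countP Prod.fst = c.countP Prod.snd) :
    (LStat (c.length + 1) (dyckOf c) = 4 ∧ ∃ k₁ k₂, twoStars (c.length + 1) (dyckOf c) k₁ k₂ ∧
        xStat (dyckOf c) k₁ = yStat (dyckOf c) k₂ + 1 ∧ 2 ≤ xStat (dyckOf c) k₁) ↔
      ∃ c₁ c₂ c₃ : List (Bool × Bool), c = c₁ ++ (true, true) :: (c₂ ++ (true, true) :: c₃) ∧
        ((true, true) ∉ c₁ ∧ (true, true) ∉ c₂ ∧ (true, true) ∉ c₃) ∧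
        c₁.countP Prod.snd = c₁.countP Prod.fst + c₂.countP Prod.fst + 1 ∧
        2 ≤ c₁.countP Prod.snd ∧
        AdjTrue (c.map Prod.snd ++ [true]) (c₁.countP Prod.fst) ∧
        AdjTrue (c.map Prod.fst ++ [true]) (c₁.countP Prod.snd + 1) ∧
        AdjTrue (c.map Prod.snd ++ [true]) (c₁.countP Prod.fst + c₂.countP Prod.fst + 1) ∧
        AdjTrue (c.map Prod.fst ++ [true]) (c₁.countP Prod.snd + c₂.countP Prod.snd + 1 + 1) := by
  have key : ∀ c₁ c₂ c₃ : List (Bool × Bool),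
      c = c₁ ++ (true, true) :: (c₂ ++ (true, true) :: c₃) →
      (true, true) ∉ c₁ → (true, true) ∉ c₂ → (true, true) ∉ c₃ →
      (LStat (c.length + 1) (dyckOf c) = 4 ↔
        (AdjTrue (c.map Prod.snd ++ [true]) (c₁.countP Prod.fst) ∧
        AdjTrue (c.map Prod.fst ++ [true]) (c₁.countP Prod.snd + 1)) ∧
        AdjTrue (c.map Prod.snd ++ [true]) (c₁.countP Prod.fst + c₂.countP Prod.fst + 1) ∧
        AdjTrue (c.map Prod.fst ++ [true])
          (c₁.countP Prod.snd + c₂.countP Prod.snd + 1 + 1)) ∧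
      xStat (dyckOf c) (c₁.length + 1) = c₁.countP Prod.snd ∧
      yStat (dyckOf c) ((c₁ ++ (true, true) :: c₂).length + 1) =
        c₁.countP Prod.fst + c₂.countP Prod.fst := by
    intro c₁ c₂ c₃ h h₁ h₂ h₃
    have h' : c = (c₁ ++ (true, true) :: c₂) ++ (true, true) :: c₃ := by simp [h]
    rw [LStat_eq_four_iff (twoStars_dyckOf hc h h₁ h₂ h₃), stat_dyckOf_eq_one hc h,
      stat_dyckOf_eq_one hc h', xStat_dyckOf hc h, yStat_dyckOf hc h', countP_up_eq h₁]
    refine ⟨?_, rfl, ?_⟩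
    · simp only [List.countP_append, List.countP_cons, if_true, add_assoc]
    · simp [List.countP_append, countP_down_eq h₁, countP_down_eq h₂]
  constructor
  · rintro ⟨hL, k₁, k₂, hk, hx, hx2⟩
    obtain ⟨c₁, c₂, c₃, h, h₁, h₂, h₃, rfl, rfl⟩ := exists_split_of_twoStars hc hk
    obtain ⟨e1, e2, e3⟩ := key c₁ c₂ c₃ h h₁ h₂ h₃
    rw [e2, e3] at hx
    rw [e2] at hx2
    obtain ⟨⟨a1, a2⟩, a3, a4⟩ := e1.1 hL
    exact ⟨c₁, c₂, c₃, h, ⟨h₁, h₂, h₃⟩, hx, hx2, a1, a2, a3, a4⟩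
  · rintro ⟨c₁, c₂, c₃, h, ⟨h₁, h₂, h₃⟩, hx, hx2, a1, a2, a3, a4⟩
    obtain ⟨e1, e2, e3⟩ := key c₁ c₂ c₃ h h₁ h₂ h₃
    exact ⟨e1.2 ⟨⟨a1, a2⟩, a3, a4⟩, _, _, twoStars_dyckOf hc h h₁ h₂ h₃, by rw [e2, e3, hx],
      by rw [e2]; exact hx2⟩

lemma adjTrue_append_iff (L M : List Bool) (j : ℕ) :
    AdjTrue (L ++ true :: M) (L.count true + 1 + j) ↔ AdjTrue M j := by
  induction L with
  | nil => simp [AdjTrue, add_comm 1 j]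
  | cons a L ih =>
    cases a
    · simpa [AdjTrue, add_right_comm _ 1 j] using ih
    · simpa [AdjTrue, add_right_comm _ 1 j] using ih

lemma not_adjTrue_append_false (L M : List Bool) :
    ¬ AdjTrue (L ++ false :: M) (L.count true) := by
  induction L with
  | nil => simp [AdjTrue]
  | cons a L ih =>
    cases a
    · cases h : L.count true <;> simp_all [AdjTrue]
    · simpa [AdjTrue] using ih

lemma adjTrue_append_true_iff (L R : List Bool) {p : ℕ} (hp : p ≤ L.count true) :
    AdjTrue (L ++ true :: R) p ↔ AdjTrue (L ++ [true]) p := by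
  induction L generalizing p with
  | nil =>
    obtain rfl : p = 0 := by simpa using hp
    simp [AdjTrue]
  | cons a L ih =>
    cases a <;> cases p <;> simp_all [AdjTrue]

lemma adjTrue_iff_exists (Q : List Bool) (p : ℕ) :
    AdjTrue Q p ↔
      ∃ Q₁ Q₂, true :: Q = Q₁ ++ true :: true :: Q₂ ∧ Q₁.count true = p := by
  induction Q generalizing p with
  | nil =>
    simp only [AdjTrue, false_iff, not_exists]
    rintro Q₁ Q₂ ⟨h, -⟩
    have := congrArg List.length h
    simp at this
    omega
  | cons a Q ih =>
    constructor
    · intro h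
      cases a
      · cases p with
        | zero => simp [AdjTrue] at h
        | succ p =>
          obtain ⟨Q₁, Q₂, h1, h2⟩ := (ih _).1 h
          rcases Q₁ with _ | ⟨b, Q₁⟩
          · simp at h2
          · simp only [List.cons_append, List.cons.injEq] at h1
            refine ⟨true :: false :: Q₁, Q₂, by simp [h1.2], ?_⟩
            rw [← h1.1] at h2
            simpa using h2
      · cases p with
        | zero => exact ⟨[], Q, by simp⟩
        | succ p =>
          obtain ⟨Q₁, Q₂, h1, h2⟩ := (ih _).1 h
          exact ⟨true :: Q₁, Q₂, by simp [h1], by simp [h2]⟩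
    · rintro ⟨Q₁, Q₂, h1, rfl⟩
      rcases Q₁ with _ | ⟨b, Q₁⟩
      · simp only [List.nil_append, List.cons.injEq, true_and] at h1
        rw [h1.1]
        simp [AdjTrue]
      · simp only [List.cons_append, List.cons.injEq] at h1
        obtain ⟨rfl, h1⟩ := h1
        cases a
        · rcases Q₁ with _ | ⟨b, Q₁⟩
          · simp at h1
          · simp only [List.cons_append, List.cons.injEq] at h1
            obtain ⟨rfl, h1⟩ := h1
            have := (ih (Q₁.count true + 1)).2 ⟨true :: Q₁, Q₂, by simp [h1], by simp⟩
            simpa [AdjTrue] using this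
        · have := (ih (Q₁.count true)).2 ⟨Q₁, Q₂, h1, rfl⟩
          simpa [AdjTrue] using this

lemma AdjTrue.reverse {L : List Bool} {p q : ℕ} (h : AdjTrue (L ++ [true]) p)
    (hL : L.count true = p + q) : AdjTrue (L.reverse ++ [true]) q := by
  rw [adjTrue_iff_exists] at h ⊢
  obtain ⟨Q₁, Q₂, h1, rfl⟩ := h
  refine ⟨Q₂.reverse, Q₁.reverse, ?_, ?_⟩
  · have := congrArg List.reverse h1
    simpa using this
  · have := congrArg (List.count true) h1
    simp at this
    simp
    omega

/-- Letters of Motzkin words as letters of two-coloured Motzkin words. -/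
def letterPair (a : Option Bool) : Bool × Bool := (a == some false, a == some true)

/-- Reversal of a path on `{u, h, d}`. -/
def flipWord (l : List (Option Bool)) : List (Option Bool) := (l.map (Option.map not)).reverse

lemma flipWord_flipWord (l : List (Option Bool)) : flipWord (flipWord l) = l := by
  simp [flipWord, Function.comp_def]

lemma length_flipWord (l : List (Option Bool)) : (flipWord l).length = l.length := by
  simp [flipWord]

lemma flipWord_append (l l' : List (Option Bool)) :
    flipWord (l ++ l') = flipWord l' ++ flipWord l := by
  simp [flipWord]

lemma count_flipWord (b : Bool) (l : List (Option Bool)) :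
    (flipWord l).count (some b) = l.count (some !b) := by
  rw [flipWord, List.count_reverse, List.count, List.countP_map, List.count]
  congr 1
  ext a
  rcases a with _ | a
  · simp
  · cases a <;> cases b <;> simp

lemma map_flipWord (b : Bool) (l : List (Option Bool)) :
    (flipWord l).map (· == some b) = (l.map (· == some !b)).reverse := by
  rw [flipWord, List.map_reverse, List.map_map]
  congr 2
  ext a
  rcases a with _ | a
  · simp
  · cases a <;> cases b <;> simp

lemma countP_fst_letterPair (l : List (Option Bool)) :
    (l.map letterPair).countP Prod.fst = l.count (some false) := by
  rw [List.countP_map]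
  rfl

lemma countP_snd_letterPair (l : List (Option Bool)) :
    (l.map letterPair).countP Prod.snd = l.count (some true) := by
  rw [List.countP_map]
  rfl

lemma star_notMem_map (l : List (Option Bool)) : (true, true) ∉ l.map letterPair := by
  rw [List.mem_map]
  rintro ⟨a, -, ha⟩
  rcases a with _ | a
  · simp [letterPair] at ha
  · cases a <;> simp [letterPair] at ha

lemma letterPair_injective : Function.Injective letterPair := by
  rintro (_ | _ | _) (_ | _ | _) h <;> simp_all [letterPair]

lemma exists_map_letterPair (c : List (Bool × Bool)) (h : (true, true) ∉ c) :
    ∃ l : List (Option Bool), c = l.map letterPair := by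
  induction c with
  | nil => exact ⟨[], rfl⟩
  | cons a c ih =>
    obtain ⟨l, rfl⟩ := ih (fun hc => h (List.mem_cons_of_mem _ hc))
    have ha : a ≠ (true, true) := fun ha => h (by simp [ha])
    obtain ⟨b, rfl⟩ : ∃ b, letterPair b = a := by
      rcases a with ⟨_ | _, _ | _⟩
      · exact ⟨none, rfl⟩
      · exact ⟨some true, rfl⟩
      · exact ⟨some false, rfl⟩
      · simp at ha
    exact ⟨b :: l, rfl⟩

/-- Prefixes of Motzkin paths ending at height `z`. -/
def IsMotzkinPrefix (z : ℕ) (l : List (Option Bool)) : Prop :=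
  (∀ p, p <+: l → p.count (some false) ≤ p.count (some true)) ∧
    l.count (some true) = l.count (some false) + z

/-- Prefixes of Motzkin paths, ending at height `z` and having `y` down steps, such that in the
path followed by an up step the `y`-th and the `(y+1)`-st up step are adjacent (if `y = 0`: the
first step is an up step). -/
def IsTightPrefix (z : ℕ) (l : List (Option Bool)) : Prop :=
  IsMotzkinPrefix z l ∧ AdjTrue (l.map (· == some true) ++ [true]) (l.count (some false))

lemma IsTightPrefix.eq_nil {l : List (Option Bool)} (h : IsTightPrefix 0 l) : l = [] := by
  obtain ⟨⟨h1, h2⟩, h3⟩ := h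
  rcases List.eq_nil_or_concat' l with rfl | ⟨l, a, rfl⟩
  · rfl
  · exfalso
    by_cases ha : a = some true
    · have := h1 l (by simp)
      simp [ha] at h2
      omega
    · refine not_adjTrue_append_false (l.map (· == some true)) [true] ?_
      have ha' : (a == some true) = false := by simpa using ha
      rw [add_zero] at h2
      rw [← h2, List.count_append, List.count_singleton] at h3
      rw [count_map_true]
      simpa [ha', ha, List.count] using h3

/-- The two-coloured Motzkin word built from its three pieces. -/
def assemble (α β δ : List (Option Bool)) : List (Bool × Bool) :=
  (α ++ [some true]).map letterPair ++ (true, true) ::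
    (β.map letterPair ++ (true, true) :: (some false :: flipWord δ).map letterPair)

lemma length_assemble (α β δ : List (Option Bool)) :
    (assemble α β δ).length = α.length + β.length + δ.length + 4 := by
  simp [assemble, length_flipWord]
  omega

lemma assemble_inj {α β δ α' β' δ' : List (Option Bool)}
    (h : assemble α β δ = assemble α' β' δ') : α = α' ∧ β = β' ∧ δ = δ' := by
  have split : ∀ {c c' r r' : List (Bool × Bool)}, (true, true) ∉ c → (true, true) ∉ c' →
      c ++ (true, true) :: r = c' ++ (true, true) :: r' → c = c' ∧ r = r' := by
    intro c
    induction c with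
    | nil =>
      rintro (_ | ⟨a, c'⟩) r r' h h' e
      · simpa using e
      · simp only [List.nil_append, List.cons_append, List.cons.injEq] at e
        exact absurd (by simp [e.1]) h'
    | cons a c ih =>
      rintro (_ | ⟨a', c'⟩) r r' h h' e
      · simp only [List.nil_append, List.cons_append, List.cons.injEq] at e
        exact absurd (by simp [e.1]) h
      · simp only [List.cons_append, List.cons.injEq] at e
        obtain ⟨e1, e2⟩ := ih (by simp_all) (by simp_all) e.2
        exact ⟨by rw [e.1, e1], e2⟩
  obtain ⟨h1, h2⟩ := split (star_notMem_map _) (star_notMem_map _) h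
  obtain ⟨h3, h4⟩ := split (star_notMem_map _) (star_notMem_map _) h2
  have inj := List.map_injective_iff.2 letterPair_injective
  refine ⟨List.append_cancel_right (inj h1), inj h3, ?_⟩
  have := inj h4
  rw [List.cons.injEq] at this
  rw [← flipWord_flipWord δ, this.2, flipWord_flipWord]

/-- Every prefix of `c`, started at height `h`, ends at a nonnegative height. -/
def StaysNonneg (h : ℕ) (c : List (Bool × Bool)) : Prop :=
  ∀ p, p <+: c → p.countP Prod.fst ≤ h + p.countP Prod.snd

lemma StaysNonneg.append {h h' : ℕ} {c c' : List (Bool × Bool)} (hc : StaysNonneg h c)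
    (hc' : StaysNonneg h' c') (e : h + c.countP Prod.snd = c.countP Prod.fst + h') :
    StaysNonneg h (c ++ c') := by
  rintro p ⟨q, hq⟩
  rcases List.append_eq_append_iff.1 hq with ⟨r, rfl, -⟩ | ⟨r, rfl, hr⟩
  · exact hc p (by simp)
  · have := hc' r ⟨q, hr.symm⟩
    simp only [List.countP_append]
    omega

lemma staysNonneg_of_countP_le {h : ℕ} {c : List (Bool × Bool)} (hc : c.countP Prod.fst ≤ h) :
    StaysNonneg h c := by
  intro p hp
  have := hp.sublist.countP_le (p := Prod.fst)
  omega

lemma prefix_map_letterPair {l : List (Option Bool)}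
    (h : ∀ p, p <+: l → p.count (some false) ≤ p.count (some true)) :
    StaysNonneg 0 (l.map letterPair) := by
  intro p hp
  obtain ⟨q, hq, rfl⟩ := List.prefix_map_iff.1 hp
  rw [countP_fst_letterPair, countP_snd_letterPair, zero_add]
  exact h q hq

lemma staysNonneg_flipWord {w : ℕ} {l : List (Option Bool)} (h : IsMotzkinPrefix w l) :
    StaysNonneg w ((flipWord l).map letterPair) := by
  intro p hp
  obtain ⟨q, ⟨r, hr⟩, rfl⟩ := List.prefix_map_iff.1 hp
  have e : flipWord r ++ flipWord q = l := by
    rw [← flipWord_append, hr, flipWord_flipWord]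
  have h1 := h.1 (flipWord r) ⟨_, e⟩
  have h2 := h.2
  rw [← e] at h2
  simp only [count_flipWord, List.count_append, countP_fst_letterPair,
    countP_snd_letterPair, Bool.not_true, Bool.not_false] at h1 h2 ⊢
  omega

lemma map_fst_letterPair (l : List (Option Bool)) :
    (l.map letterPair).map Prod.fst = l.map (· == some false) := by
  rw [List.map_map]
  rfl

lemma map_snd_letterPair (l : List (Option Bool)) :
    (l.map letterPair).map Prod.snd = l.map (· == some true) := by
  rw [List.map_map]
  rfl

lemma count_map_eq (a : Option Bool) (l : List (Option Bool)) :
    (l.map (· == a)).count true = l.count a := by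
  rw [count_map_true]
  rfl

/-- The four adjacency conditions on a two-coloured Motzkin word, expressed through its pieces. -/
lemma adjTrue_pieces_iff {A β γ : List (Option Bool)} {c : List (Bool × Bool)}
    (hc : c = A.map letterPair ++ (true, true) ::
      (β.map letterPair ++ (true, true) :: γ.map letterPair))
    (hA : A.count (some true) = A.count (some false) + β.count (some false) + 1) :
    (AdjTrue (c.map Prod.snd ++ [true]) (A.count (some false)) ∧
      AdjTrue (c.map Prod.fst ++ [true]) (A.count (some true) + 1) ∧
      AdjTrue (c.map Prod.snd ++ [true]) (A.count (some false) + β.count (some false) + 1) ∧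
      AdjTrue (c.map Prod.fst ++ [true])
        (A.count (some true) + β.count (some true) + 1 + 1)) ↔
    AdjTrue (A.map (· == some true) ++ [true]) (A.count (some false)) ∧
      AdjTrue (γ.map (· == some false) ++ [true]) 0 ∧
      AdjTrue (A.map (· == some true) ++ [true]) (A.count (some true)) ∧
      AdjTrue (γ.map (· == some false) ++ [true]) (β.count (some true) + 1) := by
  have e1 : c.map Prod.snd ++ [true] = A.map (· == some true) ++ true ::
      (β.map (· == some true) ++ true :: (γ.map (· == some true) ++ [true])) := by
    rw [hc]
    simp only [List.map_append, List.map_cons, map_snd_letterPair, List.append_assoc,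
      List.cons_append]
  have e2 : c.map Prod.fst ++ [true] =
      (A.map (· == some false) ++ true :: β.map (· == some false)) ++ true ::
        (γ.map (· == some false) ++ [true]) := by
    rw [hc]
    simp only [List.map_append, List.map_cons, map_fst_letterPair, List.append_assoc,
      List.cons_append]
  have e3 : (A.map (· == some false) ++ true :: β.map (· == some false)).count true =
      A.count (some true) := by
    rw [List.count_append, List.count_cons_self, count_map_eq, count_map_eq, hA, add_assoc]
  have hle : A.count (some false) ≤ (A.map (· == some true)).count true := by
    rw [count_map_eq]
    omega
  rw [e1, e2, ← hA, adjTrue_append_true_iff _ _ hle,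
    adjTrue_append_true_iff _ _ (count_map_eq (some true) A).ge]
  have e4 := adjTrue_append_iff (A.map (· == some false) ++ true :: β.map (· == some false))
    (γ.map (· == some false) ++ [true])
  rw [e3] at e4
  rw [← e4 0, ← e4 (β.count (some true) + 1), add_zero,
    show A.count (some true) + β.count (some true) + 1 + 1 =
      A.count (some true) + 1 + (β.count (some true) + 1) by omega]

lemma adjTrue_count_iff (A : List (Option Bool)) :
    AdjTrue (A.map (· == some true) ++ [true]) (A.count (some true)) ↔
      A = [] ∨ ∃ α, A = α ++ [some true] := by
  rcases List.eq_nil_or_concat' A with rfl | ⟨α, a, rfl⟩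
  · simp [AdjTrue]
  · by_cases ha : a = some true
    · subst ha
      have := adjTrue_append_iff (α.map (· == some true)) [true] 0
      rw [count_map_eq] at this
      simpa [AdjTrue] using this
    · have ha' : (a == some true) = false := by simpa using ha
      have := not_adjTrue_append_false (α.map (· == some true)) [true]
      rw [count_map_eq] at this
      simpa [ha', ha, List.count_singleton] using this

lemma adjTrue_zero_iff (γ : List (Option Bool)) :
    AdjTrue (γ.map (· == some false) ++ [true]) 0 ↔ γ = [] ∨ ∃ γ', γ = some false :: γ' := by
  rcases γ with _ | ⟨_ | _ | _, γ⟩ <;> simp [AdjTrue]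

/-- The two-coloured Motzkin words to be counted are exactly the words `assemble α β δ` with
tight prefixes `α`, `δ` of prescribed final heights. -/
lemma twoMotzkin_conditions_iff (c : List (Bool × Bool)) :
    (IsTwoMotzkin c ∧ ∃ c₁ c₂ c₃ : List (Bool × Bool),
        c = c₁ ++ (true, true) :: (c₂ ++ (true, true) :: c₃) ∧
        ((true, true) ∉ c₁ ∧ (true, true) ∉ c₂ ∧ (true, true) ∉ c₃) ∧
        c₁.countP Prod.snd = c₁.countP Prod.fst + c₂.countP Prod.fst + 1 ∧
        2 ≤ c₁.countP Prod.snd ∧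
        AdjTrue (c.map Prod.snd ++ [true]) (c₁.countP Prod.fst) ∧
        AdjTrue (c.map Prod.fst ++ [true]) (c₁.countP Prod.snd + 1) ∧
        AdjTrue (c.map Prod.snd ++ [true]) (c₁.countP Prod.fst + c₂.countP Prod.fst + 1) ∧
        AdjTrue (c.map Prod.fst ++ [true])
          (c₁.countP Prod.snd + c₂.countP Prod.snd + 1 + 1)) ↔
      ∃ α β δ : List (Option Bool), assemble α β δ = c ∧ 1 ≤ β.count (some false) ∧
        IsTightPrefix (β.count (some false)) α ∧ IsTightPrefix (β.count (some true)) δ := by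
  constructor
  · rintro ⟨⟨hpre, hbal⟩, c₁, c₂, c₃, hc, ⟨h₁, h₂, h₃⟩, hx, hx2, hadj⟩
    obtain ⟨A, rfl⟩ := exists_map_letterPair c₁ h₁
    obtain ⟨β, rfl⟩ := exists_map_letterPair c₂ h₂
    obtain ⟨γ, rfl⟩ := exists_map_letterPair c₃ h₃
    simp only [countP_fst_letterPair, countP_snd_letterPair] at hx hx2 hadj
    rw [adjTrue_pieces_iff hc hx, adjTrue_count_iff, adjTrue_zero_iff] at hadj
    obtain ⟨a1, a2, a3, a4⟩ := hadj
    have hbal' := hbal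
    rw [hc] at hbal'
    simp only [List.countP_append, List.countP_cons, countP_fst_letterPair,
      countP_snd_letterPair, if_true] at hbal'
    rcases a3 with rfl | ⟨α, rfl⟩
    · simp at hx2
    rcases a2 with rfl | ⟨γ, rfl⟩
    · simp only [List.count_nil] at hbal'
      omega
    simp only [List.count_append, List.count_cons, List.count_nil] at hx hx2 hbal' a1
    simp at hx hx2 hbal' a1 a4
    have hα : IsTightPrefix (β.count (some false)) α := by
      refine ⟨⟨fun p hp => ?_, by omega⟩, ?_⟩
      · have := hpre (p.map letterPair) (by
          rw [hc, List.map_append, List.append_assoc]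
          exact (hp.map letterPair).trans (List.prefix_append _ _))
        rwa [countP_fst_letterPair, countP_snd_letterPair] at this
      · rwa [adjTrue_append_true_iff _ _ (by rw [count_map_eq]; omega)] at a1
    refine ⟨α, β, flipWord γ, ?_, ?_, hα, ?_⟩
    · rw [assemble, flipWord_flipWord, hc]
    · by_contra hz
      obtain hz : β.count (some false) = 0 := by omega
      rw [hz] at hα
      rw [hα.eq_nil] at hx2
      simp at hx2
    · refine ⟨⟨fun p hp => ?_, ?_⟩, ?_⟩
      · obtain ⟨r, hr⟩ := hp
        have e : γ = flipWord r ++ flipWord p := by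
          rw [← flipWord_append, hr, flipWord_flipWord]
        have := hpre ((α ++ [some true]).map letterPair ++ (true, true) ::
          (β.map letterPair ++ (true, true) :: (some false :: flipWord r).map letterPair))
          ⟨(flipWord p).map letterPair, by rw [hc, e]; simp⟩
        simp only [List.countP_append, List.countP_cons, countP_fst_letterPair,
          countP_snd_letterPair, if_true] at this
        rw [e] at hbal'
        simp [count_flipWord] at this hbal'
        omega
      · simp [count_flipWord]
        omega
      · rw [map_flipWord, count_flipWord]
        refine AdjTrue.reverse (p := β.count (some true)) a4 ?_
        simp [count_map_eq]
        omega
  · rintro ⟨α, β, δ, rfl, hz, ⟨⟨hα, hαz⟩, hαt⟩, ⟨hδ, hδt⟩⟩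
    have hδz := hδ.2
    have hA : (α ++ [some true]).count (some true) =
        (α ++ [some true]).count (some false) + β.count (some false) + 1 := by
      simp
      omega
    refine ⟨⟨?_, ?_⟩, (α ++ [some true]).map letterPair, β.map letterPair,
      (some false :: flipWord δ).map letterPair, rfl,
      ⟨star_notMem_map _, star_notMem_map _, star_notMem_map _⟩, ?_⟩
    · have h1 := prefix_map_letterPair hα
      have h2 : StaysNonneg (β.count (some false)) [(false, true), (true, true)] :=
        staysNonneg_of_countP_le (by simpa using hz)
      have h3 : StaysNonneg (β.count (some false) + 1) (β.map letterPair) :=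
        staysNonneg_of_countP_le (by rw [countP_fst_letterPair]; omega)
      have h4 : StaysNonneg (β.count (some true) + 1) [(true, true)] :=
        staysNonneg_of_countP_le (by simp)
      have h5 : StaysNonneg (β.count (some true) + 1) [(true, false)] :=
        staysNonneg_of_countP_le (by simp)
      have h := h1.append (h2.append (h3.append (h4.append (h5.append (staysNonneg_flipWord hδ)
        (by simp [add_comm])) (by simp [add_comm])) (by
          rw [countP_fst_letterPair, countP_snd_letterPair]; omega)) (by simp; omega)) (by
          rw [countP_fst_letterPair, countP_snd_letterPair]; omega)
      intro p hp
      have := h p (by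
        convert hp using 1
        simp [assemble, letterPair])
      omega
    · simp only [assemble, List.countP_append, List.countP_cons, countP_fst_letterPair,
        countP_snd_letterPair, if_true]
      simp [count_flipWord]
      omega
    · simp only [countP_fst_letterPair, countP_snd_letterPair]
      refine ⟨hA, by rw [hA]; omega, ?_⟩
      rw [adjTrue_pieces_iff (γ := some false :: flipWord δ) (by rfl) hA]
      refine ⟨?_, ?_, ?_, ?_⟩
      · have := (adjTrue_append_true_iff (α.map (· == some true)) [true]
          (p := α.count (some false)) (by rw [count_map_eq]; omega)).2 hαt
        simpa [List.count_singleton] using this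
      · simp [AdjTrue]
      · exact (adjTrue_count_iff _).2 (Or.inr ⟨α, rfl⟩)
      · rw [List.map_cons, map_flipWord]
        have := hδt.reverse (q := β.count (some true)) (by rw [count_map_eq]; omega)
        simpa [AdjTrue] using this

section Counting

open Finset

/-- The words of length `l` on the alphabet `{u, h, d}`. -/
noncomputable def words (l : ℕ) : Finset (List (Option Bool)) :=
  (List.finite_length_eq (Option Bool) l).toFinset

lemma mem_words {l : ℕ} {w : List (Option Bool)} : w ∈ words l ↔ w.length = l := by
  simp [words]

lemma words_zero : words 0 = {[]} := by
  ext w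
  simp [mem_words]

lemma sum_words_succ {R : Type*} [AddCommMonoid R] (l : ℕ) (f : List (Option Bool) → R) :
    ∑ w ∈ words (l + 1), f w =
      ∑ w ∈ words l, (f (w ++ [none]) + (f (w ++ [some true]) + f (w ++ [some false]))) := by
  have : ∑ w ∈ words (l + 1), f w =
      ∑ x ∈ words l ×ˢ (univ : Finset (Option Bool)), f (x.1 ++ [x.2]) := by
    symm
    refine sum_nbij (fun x => x.1 ++ [x.2]) ?_ ?_ ?_ (fun _ _ => rfl)
    · intro x hx
      simpa [mem_words] using hx
    · rintro ⟨w, a⟩ - ⟨w', a'⟩ - h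
      simpa using h
    · intro w hw
      rcases List.eq_nil_or_concat' w with rfl | ⟨w, a, rfl⟩
      · simp [mem_words] at hw
      · exact ⟨(w, a), by simpa [mem_words] using hw, rfl⟩
  rw [this, sum_product]
  simp [Fintype.sum_option]

lemma sum_words_pow {R : Type*} [CommSemiring R] (x y : R) (l : ℕ) :
    ∑ w ∈ words l, x ^ w.count (some false) * y ^ w.count (some true) = (1 + y + x) ^ l := by
  induction l with
  | zero => simp [words_zero]
  | succ l ih =>
    rw [sum_words_succ, pow_succ, ← ih, sum_mul]
    refine sum_congr rfl fun w _ => ?_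
    simp only [List.count_append, List.count_singleton]
    simp [pow_succ]
    ring

open Classical in
/-- The number of prefixes of Motzkin paths of length `l` and final height `z`. -/
noncomputable def prefixCount (l z : ℕ) : ℕ := #{w ∈ words l | IsMotzkinPrefix z w}

open Classical in
/-- The number of tight prefixes of length `l` and final height `z`. -/
noncomputable def tightCount (l z : ℕ) : ℕ := #{w ∈ words l | IsTightPrefix z w}

lemma isMotzkinPrefix_nil_iff {z : ℕ} : IsMotzkinPrefix z [] ↔ z = 0 := by
  simp [IsMotzkinPrefix, eq_comm]

lemma isMotzkinPrefix_concat_iff {z : ℕ} {w : List (Option Bool)} {a : Option Bool} :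
    IsMotzkinPrefix z (w ++ [a]) ↔
      (∀ p, p <+: w → p.count (some false) ≤ p.count (some true)) ∧
        (w ++ [a]).count (some true) = (w ++ [a]).count (some false) + z := by
  refine ⟨fun ⟨h1, h2⟩ => ⟨fun p hp => h1 p (hp.trans (List.prefix_append _ _)), h2⟩,
    fun ⟨h1, h2⟩ => ⟨fun p hp => ?_, h2⟩⟩
  rw [List.prefix_concat_iff] at hp
  rcases hp with rfl | hp
  · omega
  · exact h1 p hp

lemma isMotzkinPrefix_concat_none {z : ℕ} {w : List (Option Bool)} :
    IsMotzkinPrefix z (w ++ [none]) ↔ IsMotzkinPrefix z w := by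
  rw [isMotzkinPrefix_concat_iff, IsMotzkinPrefix]
  simp [List.count_append]

lemma isMotzkinPrefix_concat_up {z : ℕ} {w : List (Option Bool)} :
    IsMotzkinPrefix (z + 1) (w ++ [some true]) ↔ IsMotzkinPrefix z w := by
  rw [isMotzkinPrefix_concat_iff, IsMotzkinPrefix]
  simp [← add_assoc]

lemma not_isMotzkinPrefix_concat_up {w : List (Option Bool)} :
    ¬ IsMotzkinPrefix 0 (w ++ [some true]) := by
  rw [isMotzkinPrefix_concat_iff]
  rintro ⟨h1, h2⟩
  have := h1 w (List.prefix_refl _)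
  simp at h2
  omega

lemma isMotzkinPrefix_concat_down {z : ℕ} {w : List (Option Bool)} :
    IsMotzkinPrefix z (w ++ [some false]) ↔ IsMotzkinPrefix (z + 1) w := by
  rw [isMotzkinPrefix_concat_iff, IsMotzkinPrefix]
  simp [add_assoc, add_comm 1 z]

lemma prefixCount_zero (z : ℕ) : prefixCount 0 z = if z = 0 then 1 else 0 := by
  classical
  rw [prefixCount, words_zero, card_filter, sum_singleton]
  simp only [isMotzkinPrefix_nil_iff]

lemma prefixCount_succ_zero (l : ℕ) :
    prefixCount (l + 1) 0 = prefixCount l 0 + prefixCount l 1 := by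
  classical
  simp only [prefixCount, card_filter, sum_words_succ, isMotzkinPrefix_concat_none,
    not_isMotzkinPrefix_concat_up, isMotzkinPrefix_concat_down, sum_add_distrib]
  simp

lemma prefixCount_succ_succ (l z : ℕ) :
    prefixCount (l + 1) (z + 1) =
      prefixCount l (z + 1) + (prefixCount l z + prefixCount l (z + 2)) := by
  classical
  simp only [prefixCount, card_filter, sum_words_succ, isMotzkinPrefix_concat_none,
    isMotzkinPrefix_concat_up, isMotzkinPrefix_concat_down, sum_add_distrib]

lemma motzkin_eq_prefixCount (n : ℕ) : motzkin n = prefixCount n 0 := by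
  classical
  rw [motzkin, prefixCount, ← Set.ncard_coe_finset]
  congr 1
  ext w
  simp [mem_words, IsMotzkinWord, IsMotzkinPrefix, and_comm, eq_comm]

/-- Insert an up step directly after the `y`-th up step. -/
def insertUp : ℕ → List (Option Bool) → List (Option Bool)
  | 0, l => some true :: l
  | _ + 1, [] => [some true]
  | y + 1, some true :: l => some true :: insertUp y l
  | y + 1, some false :: l => some false :: insertUp (y + 1) l
  | y + 1, none :: l => none :: insertUp (y + 1) l

lemma length_insertUp (y : ℕ) (l : List (Option Bool)) :
    (insertUp y l).length = l.length + 1 := by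
  induction l generalizing y with
  | nil => cases y <;> simp [insertUp]
  | cons a l ih => rcases y with _ | y <;> rcases a with _ | _ | _ <;> simp [insertUp, ih]

lemma count_down_insertUp (y : ℕ) (l : List (Option Bool)) :
    (insertUp y l).count (some false) = l.count (some false) := by
  induction l generalizing y with
  | nil => cases y <;> simp [insertUp]
  | cons a l ih => rcases y with _ | y <;> rcases a with _ | _ | _ <;> simp [insertUp, ih]

lemma count_up_insertUp (y : ℕ) (l : List (Option Bool)) :
    (insertUp y l).count (some true) = l.count (some true) + 1 := by
  induction l generalizing y with
  | nil => cases y <;> simp [insertUp]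
  | cons a l ih => rcases y with _ | y <;> rcases a with _ | _ | _ <;> simp [insertUp, ih]

lemma insertUp_injective (y : ℕ) : Function.Injective (insertUp y) := by
  intro l
  induction l generalizing y with
  | nil =>
    intro l' h
    have := congrArg List.length h
    rw [length_insertUp, length_insertUp] at this
    exact (List.eq_nil_of_length_eq_zero (by simpa using this.symm)).symm
  | cons a l ih =>
    intro l' h
    rcases l' with _ | ⟨a', l'⟩
    · have := congrArg List.length h
      rw [length_insertUp, length_insertUp] at this
      simp at this
    · rcases y with _ | y
      · simpa [insertUp] using h
      · rcases a with _ | _ | _ <;> rcases a' with _ | _ | _ <;> simp [insertUp] at h ⊢ <;>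
          exact ih _ h

lemma adjTrue_insertUp {y : ℕ} {l : List (Option Bool)} (hy : y ≤ l.count (some true))
    (R : List Bool) : AdjTrue ((insertUp y l).map (· == some true) ++ R) y := by
  induction l generalizing y with
  | nil =>
    obtain rfl : y = 0 := by simpa using hy
    simp [insertUp, AdjTrue]
  | cons a l ih =>
    rcases y with _ | y <;> rcases a with _ | _ | _ <;> simp_all [insertUp, AdjTrue]

lemma exists_insertUp {y : ℕ} {l : List (Option Bool)} (hy : y < l.count (some true))
    {R : List Bool} (h : AdjTrue (l.map (· == some true) ++ R) y) : ∃ l', insertUp y l' = l := by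
  induction l generalizing y with
  | nil => simp at hy
  | cons a l ih =>
    rcases y with _ | y
    · rcases a with _ | _ | _
      · simp [AdjTrue] at h
      · simp [AdjTrue] at h
      · exact ⟨l, by simp [insertUp]⟩
    · rcases a with _ | _ | _
      · obtain ⟨l', rfl⟩ := ih (by simpa using hy) (by simpa [AdjTrue] using h)
        exact ⟨none :: l', rfl⟩
      · obtain ⟨l', rfl⟩ := ih (by simpa using hy) (by simpa [AdjTrue] using h)
        exact ⟨some false :: l', rfl⟩
      · obtain ⟨l', rfl⟩ := ih (by simpa using hy) (by simpa [AdjTrue] using h)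
        exact ⟨some true :: l', rfl⟩

lemma forall_prefix_cons_iff {P : List (Option Bool) → Prop} {a : Option Bool}
    {l : List (Option Bool)} :
    (∀ p, p <+: a :: l → P p) ↔ P [] ∧ ∀ p, p <+: l → P (a :: p) := by
  simp only [List.prefix_cons_iff]
  constructor
  · exact fun h => ⟨h _ (Or.inl rfl), fun p hp => h _ (Or.inr ⟨p, rfl, hp⟩)⟩
  · rintro ⟨h1, h2⟩ p (rfl | ⟨t, rfl, ht⟩)
    exacts [h1, h2 t ht]

lemma forall_prefix_insertUp_iff {h y : ℕ} {l : List (Option Bool)}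
    (hd : l.count (some false) ≤ h + y) (hy : y ≤ l.count (some true)) :
    (∀ p, p <+: insertUp y l → p.count (some false) ≤ h + p.count (some true)) ↔
      ∀ p, p <+: l → p.count (some false) ≤ h + p.count (some true) := by
  have base : ∀ {h h' : ℕ} {l : List (Option Bool)}, l.count (some false) ≤ h' → h' ≤ h →
      ∀ p, p <+: l → p.count (some false) ≤ h + p.count (some true) := by
    intro h h' l hl hh p hp
    have := hp.sublist.count_le (some false)
    omega
  induction l generalizing h y with
  | nil =>
    obtain rfl : y = 0 := by simpa using hy
    simp only [insertUp, forall_prefix_cons_iff]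
    simp
  | cons a l ih =>
    rcases y with _ | y
    · refine iff_of_true ?_ (base hd le_rfl)
      simp only [insertUp]
      exact base (h' := h) (by simpa using hd) le_rfl
    · rcases a with _ | _ | _
      · simp only [insertUp, forall_prefix_cons_iff]
        simpa using ih (h := h) (y := y + 1) (by simpa using hd) (by simpa using hy)
      · simp only [insertUp, forall_prefix_cons_iff]
        rcases h with _ | h
        · refine iff_of_false ?_ ?_
          · exact fun hh => by simpa using hh.2 [] List.nil_prefix
          · exact fun hh => by simpa using hh.2 [] List.nil_prefix
        · have := ih (h := h) (y := y + 1) (by simp at hd; omega) (by simpa using hy)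
          simpa [add_right_comm h 1] using this
      · simp only [insertUp, forall_prefix_cons_iff]
        have := ih (h := h + 1) (y := y) (by simp at hd; omega) (by simpa using hy)
        simpa [add_assoc, add_comm 1] using this

lemma isTightPrefix_nil_iff {z : ℕ} : IsTightPrefix z [] ↔ z = 0 := by
  simp [IsTightPrefix, isMotzkinPrefix_nil_iff, AdjTrue]

lemma tightCount_zero_right (l : ℕ) : tightCount l 0 = if l = 0 then 1 else 0 := by
  classical
  have : ∀ w, IsTightPrefix 0 w ↔ w = [] := fun w =>
    ⟨fun h => h.eq_nil, fun h => h ▸ isTightPrefix_nil_iff.2 rfl⟩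
  simp only [tightCount, this]
  rcases l with _ | l
  · simp [words_zero, filter_singleton]
  · rw [filter_eq_empty_iff.2]
    · simp
    · rintro w hw rfl
      simp [mem_words] at hw

lemma tightCount_zero_succ (z : ℕ) : tightCount 0 (z + 1) = 0 := by
  classical
  rw [tightCount, words_zero, filter_singleton]
  simp [isTightPrefix_nil_iff]

lemma tightCount_succ_succ (l z : ℕ) : tightCount (l + 1) (z + 1) = prefixCount l z := by
  classical
  symm
  refine card_nbij (fun w => insertUp (w.count (some false)) w) ?_ ?_ ?_
  · intro w hw
    simp only [coe_filter, mem_words, Set.mem_ofPred_eq] at hw ⊢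
    obtain ⟨hl, h1, h2⟩ := hw
    refine ⟨by rw [length_insertUp, hl], ⟨?_, ?_⟩, ?_⟩
    · have := (forall_prefix_insertUp_iff (h := 0) (l := w) (y := w.count (some false))
        (by omega) (by omega)).2 (by simpa using h1)
      simpa using this
    · rw [count_up_insertUp, count_down_insertUp]
      omega
    · rw [count_down_insertUp]
      exact adjTrue_insertUp (by omega) _
  · intro w _ w' _ h
    have := congrArg (List.count (some false)) h
    simp only [count_down_insertUp] at this
    simp only [this] at h
    exact insertUp_injective _ h
  · intro w hw
    simp only [coe_filter, mem_words, Set.mem_ofPred_eq] at hw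
    obtain ⟨hl, ⟨h1, h2⟩, h3⟩ := hw
    obtain ⟨w', hw'⟩ := exists_insertUp (by omega) h3
    have e1 := count_down_insertUp (w.count (some false)) w'
    have e2 := count_up_insertUp (w.count (some false)) w'
    have e3 := length_insertUp (w.count (some false)) w'
    rw [hw'] at e1 e2 e3
    refine ⟨w', ?_, by simp only; rw [← e1, hw']⟩
    simp only [coe_filter, mem_words, Set.mem_ofPred_eq]
    refine ⟨by omega, ?_, by omega⟩
    have := (forall_prefix_insertUp_iff (h := 0) (l := w') (y := w.count (some false))
      (by omega) (by omega)).1 (by rw [hw']; simpa using h1)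
    simpa using this

end Counting

open PowerSeries

/-- The Motzkin numbers, defined by their convolution recurrence. -/
def motzkinRec : ℕ → ℕ
  | 0 => 1
  | 1 => 1
  | n + 2 => motzkinRec (n + 1) + ∑ i : Fin (n + 1), motzkinRec i * motzkinRec (n - i)

/-- The generating function of the sequence `motzkinRec`. -/
noncomputable def motzkinSeries : PowerSeries ℤ := PowerSeries.mk fun n => (motzkinRec n : ℤ)

/-- The generating function of the sequence `motzkinRec`, shifted by one. -/
noncomputable def shiftedSeries : PowerSeries ℤ := X * motzkinSeries

lemma motzkinSeries_eq : motzkinSeries = 1 + shiftedSeries + shiftedSeries ^ 2 := by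
  have e : shiftedSeries ^ 2 = X * (X * (motzkinSeries * motzkinSeries)) := by
    rw [shiftedSeries]
    ring
  rw [e, shiftedSeries]
  ext n
  rcases n with _ | _ | n
  · simp [motzkinSeries, motzkinRec]
  · simp [motzkinSeries, motzkinRec, coeff_succ_X_mul, coeff_one]
  · rw [map_add, map_add, coeff_succ_X_mul, coeff_succ_X_mul, coeff_succ_X_mul, coeff_one,
      if_neg (by omega), zero_add, coeff_mul, Finset.Nat.sum_antidiagonal_eq_sum_range_succ_mk,
      Finset.sum_range]
    simp only [motzkinSeries, coeff_mk, motzkinRec]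
    push_cast
    rfl

lemma coeff_motzkinSeries_mul_pow (l z : ℕ) :
    coeff l (motzkinSeries * shiftedSeries ^ z) = (prefixCount l z : ℤ) := by
  induction l generalizing z with
  | zero =>
    rw [prefixCount_zero]
    rcases z with _ | z
    · simp [motzkinSeries, motzkinRec]
    · simp [shiftedSeries]
  | succ l ih =>
    rcases z with _ | z
    · have : motzkinSeries * shiftedSeries ^ 0 =
          1 + X * (motzkinSeries * shiftedSeries ^ 0 + motzkinSeries * shiftedSeries ^ 1) := by
        conv_lhs => rw [motzkinSeries_eq]
        rw [shiftedSeries]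
        ring
      rw [this, prefixCount_succ_zero, map_add, coeff_succ_X_mul, map_add, ih, ih]
      simp [coeff_one]
    · have : motzkinSeries * shiftedSeries ^ (z + 1) =
          X * (motzkinSeries * shiftedSeries ^ (z + 1) + (motzkinSeries * shiftedSeries ^ z +
            motzkinSeries * shiftedSeries ^ (z + 2))) := by
        have h : shiftedSeries = X * (1 + shiftedSeries + shiftedSeries ^ 2) := by
          rw [← motzkinSeries_eq, shiftedSeries]
        rw [pow_succ]
        conv_lhs => rw [← mul_assoc]; arg 2; rw [h]
        ring
      rw [this, prefixCount_succ_succ, coeff_succ_X_mul, map_add, map_add, ih, ih, ih]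
      simp

lemma coeff_motzkinSeries (n : ℕ) : coeff n motzkinSeries = (motzkin n : ℤ) := by
  rw [motzkin_eq_prefixCount, ← coeff_motzkinSeries_mul_pow, pow_zero, mul_one]

lemma coeff_shiftedSeries_pow (l z : ℕ) :
    coeff l (shiftedSeries ^ z) = (tightCount l z : ℤ) := by
  rcases z with _ | z
  · rw [tightCount_zero_right]
    simp [coeff_one]
  · have : shiftedSeries ^ (z + 1) = X * (motzkinSeries * shiftedSeries ^ z) := by
      rw [pow_succ]
      conv_lhs => arg 2; rw [shiftedSeries]
      ring
    rw [this]
    rcases l with _ | l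
    · rw [tightCount_zero_succ]
      simp
    · rw [tightCount_succ_succ, coeff_succ_X_mul, coeff_motzkinSeries_mul_pow]

lemma coeff_of_one_sub_mul_eq_one {F A : PowerSeries ℤ} (h : (1 - X * A) * F = 1) (N : ℕ) :
    coeff N F = ∑ l ∈ Finset.range (N + 1), coeff (N - l) (A ^ l) := by
  have geom := mul_neg_geom_sum (X * A) (N + 1)
  have e : F = ∑ l ∈ Finset.range (N + 1), (X * A) ^ l + X ^ (N + 1) * (A ^ (N + 1) * F) := by
    linear_combination (∑ l ∈ Finset.range (N + 1), (X * A) ^ l) * h - F * geom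
  conv_lhs => rw [e]
  rw [map_add, coeff_X_pow_mul', if_neg (by omega), add_zero, map_sum]
  refine Finset.sum_congr rfl fun l hl => ?_
  rw [mul_pow, coeff_X_pow_mul', if_pos (by simp at hl; omega)]

lemma sum_words_filter_pow (Y : PowerSeries ℤ) (l : ℕ) :
    ∑ β ∈ words l with 1 ≤ β.count (some false),
        Y ^ β.count (some false) * Y ^ β.count (some true) =
      (1 + Y + Y) ^ l - (1 + Y) ^ l := by
  have h0 := sum_words_pow 0 Y l
  rw [add_zero] at h0
  rw [← h0, ← sum_words_pow Y Y l, ← Finset.sum_sub_distrib, Finset.sum_filter]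
  refine Finset.sum_congr rfl fun β _ => ?_
  split_ifs with hβ
  · rw [zero_pow (by omega), zero_mul, sub_zero]
  · rw [show β.count (some false) = 0 by omega]
    simp

/-- The total number of triples of words, by lengths. -/
lemma sum_tightCount_eq (N : ℕ) :
    ∑ l ∈ Finset.range (N + 2 + 1), ∑ β ∈ words l with 1 ≤ β.count (some false),
        ∑ ij ∈ Finset.HasAntidiagonal.antidiagonal (N + 2 - l),
          tightCount ij.1 (β.count (some false)) * tightCount ij.2 (β.count (some true)) =
      ∑ i ∈ Finset.range (N + 1), (i + 1) * motzkin i * motzkin (N - i) := by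
  have hM := motzkinSeries_eq
  have hY : shiftedSeries = X * motzkinSeries := rfl
  have hD : derivative ℤ shiftedSeries * (1 - X - 2 * X * shiftedSeries) = motzkinSeries := by
    have := congrArg (derivative ℤ) hY
    conv_rhs at this => rw [hM]
    rw [Derivation.leibniz, map_add, map_add, derivative_X, sq, Derivation.leibniz] at this
    simp only [smul_eq_mul, Derivation.map_one_eq_zero] at this
    linear_combination this - hM
  have hB : (1 - X * (1 + shiftedSeries)) * motzkinSeries = 1 := by
    linear_combination hM + (1 + shiftedSeries) * hY
  have hA : (1 - X * (1 + shiftedSeries + shiftedSeries)) *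
      (motzkinSeries + X ^ 2 * (derivative ℤ shiftedSeries * motzkinSeries)) = 1 := by
    linear_combination hB + X ^ 2 * motzkinSeries * hD - X * motzkinSeries * hY
  have key : ∀ l ∈ Finset.range (N + 2 + 1), ∑ β ∈ words l with 1 ≤ β.count (some false),
        ∑ ij ∈ Finset.HasAntidiagonal.antidiagonal (N + 2 - l),
          (tightCount ij.1 (β.count (some false)) : ℤ) * tightCount ij.2 (β.count (some true)) =
      coeff (N + 2 - l) ((1 + shiftedSeries + shiftedSeries) ^ l) -
        coeff (N + 2 - l) ((1 + shiftedSeries) ^ l) := by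
    intro l _
    rw [← map_sub, ← sum_words_filter_pow, map_sum]
    refine Finset.sum_congr rfl fun β _ => ?_
    rw [coeff_mul]
    simp only [coeff_shiftedSeries_pow]
  rw [← Nat.cast_inj (R := ℤ)]
  push_cast
  rw [Finset.sum_congr rfl key, Finset.sum_sub_distrib, ← coeff_of_one_sub_mul_eq_one hA,
    ← coeff_of_one_sub_mul_eq_one hB, map_add, add_sub_cancel_left, coeff_X_pow_mul',
    if_pos (by omega), Nat.add_sub_cancel, coeff_mul, Finset.Nat.sum_antidiagonal_eq_sum_range_succ_mk]
  refine Finset.sum_congr rfl fun i _ => ?_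
  rw [coeff_derivative, shiftedSeries, coeff_succ_X_mul, coeff_motzkinSeries, coeff_motzkinSeries]
  ring

open Classical in
/-- The triples of words from which the Dyck paths to be counted are built, by lengths. -/
noncomputable def pieces (N : ℕ) :
    Finset (Σ _ : ℕ, Σ _ : List (Option Bool), Σ _ : ℕ × ℕ,
      List (Option Bool) × List (Option Bool)) :=
  (Finset.range (N + 1)).sigma fun l =>
    ((words l).filter fun β => 1 ≤ β.count (some false)).sigma fun β =>
      (Finset.HasAntidiagonal.antidiagonal (N - l)).sigma fun ij =>
        ((words ij.1).filter (IsTightPrefix (β.count (some false)))) ×ˢ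
          ((words ij.2).filter (IsTightPrefix (β.count (some true))))

lemma card_pieces (N : ℕ) :
    (pieces N).card = ∑ l ∈ Finset.range (N + 1), ∑ β ∈ words l with 1 ≤ β.count (some false),
      ∑ ij ∈ Finset.HasAntidiagonal.antidiagonal (N - l),
        tightCount ij.1 (β.count (some false)) * tightCount ij.2 (β.count (some true)) := by
  simp only [pieces, Finset.card_sigma, Finset.card_product]
  rfl

lemma mem_pieces {N l i j : ℕ} {α β δ : List (Option Bool)} :
    (⟨l, β, (i, j), (α, δ)⟩ : Σ _ : ℕ, Σ _ : List (Option Bool), Σ _ : ℕ × ℕ,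
      List (Option Bool) × List (Option Bool)) ∈ pieces N ↔
    (l = β.length ∧ i = α.length ∧ j = δ.length ∧ α.length + β.length + δ.length = N) ∧
      1 ≤ β.count (some false) ∧ IsTightPrefix (β.count (some false)) α ∧
        IsTightPrefix (β.count (some true)) δ := by
  simp only [pieces, Finset.mem_sigma, Finset.mem_range, Finset.mem_filter, mem_words,
    Finset.HasAntidiagonal.mem_antidiagonal, Finset.mem_product]
  constructor
  · rintro ⟨h1, ⟨h2, h3⟩, h4, ⟨h5, h6⟩, h7, h8⟩
    exact ⟨⟨by omega, by omega, by omega, by omega⟩, h3, h6, h8⟩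
  · rintro ⟨⟨h1, h2, h3, h4⟩, h5, h6, h7⟩
    exact ⟨by omega, ⟨h1.symm, h5⟩, by omega, ⟨h2.symm, h6⟩, h3.symm, h7⟩

lemma isTwoMotzkin_assemble {α β δ : List (Option Bool)} (hβ : 1 ≤ β.count (some false))
    (hα : IsTightPrefix (β.count (some false)) α) (hδ : IsTightPrefix (β.count (some true)) δ) :
    IsTwoMotzkin (assemble α β δ) :=
  ((twoMotzkin_conditions_iff _).2 ⟨α, β, δ, rfl, hβ, hα, hδ⟩).1

/-- **Lemma.** For `n ≥ 7`, the number of Dyck paths `D ∈ 𝒟̂ₙ` with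
`x₁(D) = y₂(D) + 1 ≥ 2` is `Σ_{i=0}^{n-7} (i+1)·Mᵢ·M_{n-7-i}`. -/
theorem dyckHat_x1_eq_y2_succ_count (n : ℕ) (hn : 7 ≤ n) :
    {w | IsDyckWord n w ∧ LStat n w = 4 ∧ ∃ k₁ k₂, twoStars n w k₁ k₂ ∧
        xStat w k₁ = yStat w k₂ + 1 ∧ 2 ≤ xStat w k₁}.ncard =
      ∑ i ∈ Finset.range (n - 7 + 1), (i + 1) * motzkin i * motzkin (n - 7 - i) := by
  obtain ⟨N, rfl⟩ : ∃ N, n = N + 2 + 4 + 1 := ⟨n - 7, by omega⟩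
  have himage : {w | IsDyckWord (N + 2 + 4 + 1) w ∧ LStat (N + 2 + 4 + 1) w = 4 ∧ ∃ k₁ k₂,
      twoStars (N + 2 + 4 + 1) w k₁ k₂ ∧ xStat w k₁ = yStat w k₂ + 1 ∧ 2 ≤ xStat w k₁} =
      (fun x : Σ _ : ℕ, Σ _ : List (Option Bool), Σ _ : ℕ × ℕ,
        List (Option Bool) × List (Option Bool) =>
          dyckOf (assemble x.2.2.2.1 x.2.1 x.2.2.2.2)) '' (pieces (N + 2) : Set _) := by
    ext w
    constructor
    · rintro ⟨hw, hcond⟩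
      obtain ⟨c, hl, hc, rfl⟩ := hw.exists_dyckOf
      rw [← hl, dyckOf_mem_iff hc.2] at hcond
      obtain ⟨α, β, δ, rfl, hβ, hα, hδ⟩ := (twoMotzkin_conditions_iff c).1 ⟨hc, hcond⟩
      rw [length_assemble] at hl
      exact ⟨⟨β.length, β, (α.length, δ.length), (α, δ)⟩,
        mem_pieces.2 ⟨⟨rfl, rfl, rfl, by omega⟩, hβ, hα, hδ⟩, rfl⟩
    · rintro ⟨⟨l, β, ⟨i, j⟩, ⟨α, δ⟩⟩, hx, rfl⟩
      obtain ⟨⟨-, -, -, hl⟩, hβ, hα, hδ⟩ := mem_pieces.1 hx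
      have hlen : (assemble α β δ).length = N + 2 + 4 := by rw [length_assemble, hl]
      obtain ⟨hc, hcond⟩ := (twoMotzkin_conditions_iff _).2 ⟨α, β, δ, rfl, hβ, hα, hδ⟩
      rw [← dyckOf_mem_iff hc.2, hlen] at hcond
      have hw := hc.isDyckWord
      rw [hlen] at hw
      exact ⟨hw, hcond⟩
  rw [himage, Set.InjOn.ncard_image, Set.ncard_coe_finset, card_pieces, sum_tightCount_eq]
  · congr 1
  · rintro ⟨l, β, ⟨i, j⟩, ⟨α, δ⟩⟩ hx ⟨l', β', ⟨i', j'⟩, ⟨α', δ'⟩⟩ hx' h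
    obtain ⟨⟨rfl, rfl, rfl, -⟩, hβ, hα, hδ⟩ := mem_pieces.1 hx
    obtain ⟨⟨rfl, rfl, rfl, -⟩, hβ', hα', hδ'⟩ := mem_pieces.1 hx'
    obtain ⟨rfl, rfl, rfl⟩ := assemble_inj (dyckOf_injOn (isTwoMotzkin_assemble hβ hα hδ)
      (isTwoMotzkin_assemble hβ' hα' hδ') h)
    rfl
end

section
/- Let D ∈ D_n and suppose D has a return after 2k steps for some 1 ≤ k < n. Then r_k(D) > 0 and s_k(D) > 0, and consequently binom(r_k(D)+s_k(D), r_k(D)) > 1. In particular, every D ∈ D_n^{r,s} (for r, s ≥ 1) has at most two returns. -/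
theorem List.getD_findIdxs_lt_of_lt_countP_take {α : Type*} {p : α → Bool} {w : List α} {i m : ℕ}
    (h : i < (w.take m).countP p) : (w.findIdxs p).getD i 0 < m := by
  have hlen : i < ((w.take m).findIdxs p).length := by rwa [List.length_findIdxs]
  have hget : (w.findIdxs p).getD i 0 = ((w.take m).findIdxs p)[i] := by
    conv_lhs => rw [← List.take_append_drop m w]
    rw [List.findIdxs_append, List.getD_append _ _ _ _ hlen, List.getD_eq_getElem _ _ hlen]
  have hlt := List.getElem_findIdxs_lt hlen
  have := List.length_take_le m w
  omega

theorem List.le_getD_findIdxs_of_countP_take_le {α : Type*} {p : α → Bool} {w : List α} {i m : ℕ}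
    (h : (w.take m).countP p ≤ i) (hi : i < w.countP p) :
    m ≤ (w.findIdxs p).getD i 0 := by
  by_contra! hlt
  have hlen : i < (w.findIdxs p).length := by rwa [List.length_findIdxs]
  rw [List.getD_eq_getElem _ _ hlen] at hlt
  have hw : w.findIdxs p =
      (w.take m).findIdxs p ++ (w.drop m).findIdxs p (0 + (w.take m).length) := by
    rw [← List.findIdxs_append, List.take_append_drop]
  have hge : (w.take m).length ≤ (w.findIdxs p)[i] := by
    simp only [hw]
    rw [List.getElem_append_right (by rwa [List.length_findIdxs])]
    exact (Nat.zero_add _).ge.trans (List.le_getElem_findIdxs _)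
  have := List.getElem_findIdxs_lt hlen
  rw [List.length_take] at hge
  omega

theorem List.getElem?_getD_findIdxs {w : List Bool} {c : Bool} {i : ℕ} (hi : i < w.count c) :
    w[(w.findIdxs (· == c)).getD i 0]? = some c := by
  have hlen : i < (w.findIdxs (· == c)).length := by rwa [List.length_findIdxs]
  rw [List.getD_eq_getElem _ _ hlen]
  have := List.getElem_getElem_findIdxs hlen
  rw [List.getElem?_eq_getElem (by simpa using List.getElem_findIdxs_lt hlen)]
  simpa using this

theorem List.count_drop_take_pos {α : Type*} [BEq α] [LawfulBEq α] {w : List α} {c : α}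
    {p m q : ℕ} (hp : p < m) (hq : m < q) (hm : w[m]? = some c) :
    0 < ((w.take q).drop (p + 1)).count c := by
  rw [List.count_pos_iff, List.mem_iff_getElem?]
  refine ⟨m - (p + 1), ?_⟩
  rw [List.getElem?_drop, Nat.add_sub_cancel' hp, List.getElem?_take_of_lt hq, hm]

namespace IsDyckWord

variable {n k : ℕ} {w : List Bool}

theorem count_take_eq_of_return (hw : IsDyckWord n w) (hkn : k ≤ n)
    (h : (w.take (2 * k)).count false = (w.take (2 * k)).count true) :
    (w.take (2 * k)).count true = k ∧ (w.take (2 * k)).count false = k := by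
  have hsum := List.count_true_add_count_false (w.take (2 * k))
  rw [List.length_take, hw.1] at hsum
  omega

theorem getElem?_of_return (hw : IsDyckWord n w) (hk : 1 ≤ k) (hkn : k < n)
    (h : (w.take (2 * k)).count false = (w.take (2 * k)).count true) :
    w[2 * k - 1]? = some false ∧ w[2 * k]? = some true := by
  obtain ⟨hlen, -, -, hpre⟩ := hw
  have hprev := hpre _ (w.take_prefix (2 * k - 1))
  have hnext := hpre _ (w.take_prefix (2 * k + 1))
  rw [List.take_succ_eq_append_getElem (by omega)] at hnext
  have hsplit := h
  rw [← Nat.sub_add_cancel (by omega : 1 ≤ 2 * k),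
    List.take_succ_eq_append_getElem (by omega)] at hsplit
  rw [List.getElem?_eq_getElem (by omega), List.getElem?_eq_getElem (by omega)]
  rcases hb : w[2 * k - 1]'(by omega) <;> rcases hc : w[2 * k]'(by omega) <;>
    simp_all

theorem rStat_pos_of_return (hw : IsDyckWord n w) (hk : 1 ≤ k) (hkn : k < n)
    (h : (w.take (2 * k)).count false = (w.take (2 * k)).count true) : 0 < rStat w k := by
  obtain ⟨hdown, -⟩ := hw.getElem?_of_return hk hkn h
  obtain ⟨htrue, -⟩ := hw.count_take_eq_of_return hkn.le h
  have hcount : w.count true = n := hw.2.1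
  have hlt : (upIdxs w).getD (k - 1) 0 < 2 * k :=
    List.getD_findIdxs_lt_of_lt_countP_take (by rw [← List.count]; omega)
  have hge : 2 * k ≤ (upIdxs w).getD k 0 :=
    List.le_getD_findIdxs_of_countP_take_le htrue.le (hkn.trans_eq hcount.symm)
  have hne : (upIdxs w).getD (k - 1) 0 ≠ 2 * k - 1 := fun heq => by
    have hup : w[(upIdxs w).getD (k - 1) 0]? = some true :=
      List.getElem?_getD_findIdxs (by omega)
    rw [heq, hdown] at hup
    cases hup
  exact List.count_drop_take_pos (by omega) (by omega) hdown

theorem sStat_pos_of_return (hw : IsDyckWord n w) (hk : 1 ≤ k) (hkn : k < n)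
    (h : (w.take (2 * k)).count false = (w.take (2 * k)).count true) : 0 < sStat w k := by
  obtain ⟨-, hup⟩ := hw.getElem?_of_return hk hkn h
  obtain ⟨-, hfalse⟩ := hw.count_take_eq_of_return hkn.le h
  have hcount : w.count false = n := hw.2.2.1
  have hlt : (downIdxs w).getD (k - 1) 0 < 2 * k :=
    List.getD_findIdxs_lt_of_lt_countP_take (by rw [← List.count]; omega)
  have hge : 2 * k ≤ (downIdxs w).getD k 0 :=
    List.le_getD_findIdxs_of_countP_take_le hfalse.le (hkn.trans_eq hcount.symm)
  have hne : (downIdxs w).getD k 0 ≠ 2 * k := fun heq => by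
    have hdown : w[(downIdxs w).getD k 0]? = some false :=
      List.getElem?_getD_findIdxs (by omega)
    rw [heq, hup] at hdown
    cases hdown
  exact List.count_drop_take_pos hlt (by omega) hup

theorem card_returns_le_two (hw : IsDyckWord n w) {r s : ℕ} (hrs : w ∈ dyckRS n r s) :
    (returns n w).card ≤ 2 := by
  obtain ⟨-, i, -, -, -, -, huniq⟩ := hrs
  have hsub : returns n w ⊆ {i, n} := by
    intro k hk
    simp only [returns, Finset.mem_filter, Finset.mem_Icc] at hk
    obtain ⟨⟨hk1, hkn⟩, hret⟩ := hk
    rw [Finset.mem_insert, Finset.mem_singleton]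
    rcases hkn.eq_or_lt with rfl | hlt
    · exact Or.inr rfl
    · exact Or.inl (huniq k (Finset.mem_Icc.2 ⟨hk1, by omega⟩)
        ⟨hw.rStat_pos_of_return hk1 hlt hret, hw.sStat_pos_of_return hk1 hlt hret⟩)
  exact (Finset.card_le_card hsub).trans Finset.card_le_two

end IsDyckWord

/-- **Lemma.** If `D ∈ 𝒟ₙ` has a return after `2k` steps with `1 ≤ k < n`, then
`r_k(D) > 0`, `s_k(D) > 0`, and `C(r_k + s_k, r_k) > 1`; in particular every
`D ∈ 𝒟ₙ^{r,s}` (with `r, s ≥ 1`) has at most two returns. -/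
theorem dyck_return_rs_pos (n : ℕ) (w : List Bool) (hw : IsDyckWord n w) :
    (∀ k : ℕ, 1 ≤ k → k < n →
      (w.take (2 * k)).count false = (w.take (2 * k)).count true →
      0 < rStat w k ∧ 0 < sStat w k ∧
        1 < Nat.choose (rStat w k + sStat w k) (rStat w k)) ∧
    (∀ r s : ℕ, 1 ≤ r → 1 ≤ s → w ∈ dyckRS n r s → (returns n w).card ≤ 2) := by
  refine ⟨fun k hk hkn h => ?_, fun r s _ _ hrs => hw.card_returns_le_two hrs⟩
  have hr := hw.rStat_pos_of_return hk hkn h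
  have hs := hw.sStat_pos_of_return hk hkn h
  refine ⟨hr, hs, ?_⟩
  have hpos : 0 < (rStat w k + sStat w k).choose (rStat w k) :=
    Nat.choose_pos (Nat.le_add_right _ _)
  have hne : (rStat w k + sStat w k).choose (rStat w k) ≠ 1 := by
    rw [Ne, Nat.choose_eq_one_iff]
    omega
  omega
end
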